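/- arXiv:1712.04549 — 4 statements merged into one kernel-verified Lean document; each statement's English description precedes it below -/
import Mathlib

section
/- For every two integers a ≥ 1 and k ≥ 1 there exists an integer h = h(a,k) such that the following holds: for every coloring of the major vertices of T_h using k colors, there exists a monotone homeomorphic embedding η: T_a ↪ T_h such that all major vertices of T_a map to major vertices of T_h of the same color. -/
/-!
Common definitions: minors, widths, connectivity, the specific graphs
`K4`, `K23`, `C32`, `graphA`, the binary trees `CT_h`, the graphs `𝒫_k`, `𝒬_k`,
the trees `T_h`, homeomorphic embeddings, cascades, and related notions,
following Dang--Thomas, "Minors of two-connected graphs of large path-width".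
-/

open SimpleGraph

/-- A minor model of `H` in `G`: branch sets `f w` are nonempty, connected,
pairwise disjoint, and edges of `H` are realized by edges of `G` between branch sets. -/
def IsMinorModel {W V : Type*} (H : SimpleGraph W) (G : SimpleGraph V) (f : W → Set V) : Prop :=
  (∀ w, (f w).Nonempty) ∧
  (∀ w, (G.induce (f w)).Connected) ∧
  (∀ w₁ w₂ : W, w₁ ≠ w₂ → Disjoint (f w₁) (f w₂)) ∧
  (∀ w₁ w₂ : W, H.Adj w₁ w₂ → ∃ v₁ ∈ f w₁, ∃ v₂ ∈ f w₂, G.Adj v₁ v₂)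

/-- `H` is (isomorphic to) a minor of `G`. -/
def IsMinor {W V : Type*} (H : SimpleGraph W) (G : SimpleGraph V) : Prop :=
  ∃ f : W → Set V, IsMinorModel H G f

/-- The complete graph on four vertices. -/
def K4 : SimpleGraph (Fin 4) := ⊤

/-- The complete bipartite graph `K_{2,3}`. -/
def K23 : SimpleGraph (Fin 2 ⊕ Fin 3) := completeBipartiteGraph (Fin 2) (Fin 3)

/-- The graph `A`: a cycle `a₁a₂a₃a₄a₅a₆a₁` plus the edges `a₁a₃`, `a₃a₅`, `a₅a₁`. -/
def graphA : SimpleGraph (Fin 6) :=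
  SimpleGraph.fromEdgeSet
    {s(0, 1), s(1, 2), s(2, 3), s(3, 4), s(4, 5), s(5, 0), s(0, 2), s(2, 4), s(4, 0)}

/-- The graph `C_{3,2}`: two disjoint triangles. -/
def C32 : SimpleGraph (Fin 2 × Fin 3) :=
  SimpleGraph.fromRel (fun u v => u.1 = v.1)

/-- A graph is outerplanar iff it has no `K₄` minor and no `K_{2,3}` minor
(the classical characterization of outerplanarity). -/
def Outerplanar {V : Type*} (G : SimpleGraph V) : Prop :=
  ¬ IsMinor K4 G ∧ ¬ IsMinor K23 G

/-- `G` is `k`-connected: it has more than `k` vertices and deleting fewer than `k`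
vertices leaves a connected graph. -/
def IsKConnected {V : Type*} [Fintype V] (k : ℕ) (G : SimpleGraph V) : Prop :=
  k + 1 ≤ Fintype.card V ∧
  ∀ S : Finset V, S.card < k → (G.induce ((↑S : Set V)ᶜ)).Connected

/-- `(Tr, X)` is a tree-decomposition of `G`: `Tr` is a tree, the bags `X t` cover all
vertices and edges (W1), and whenever `t₂` lies on the path of `Tr` between `t₁` and `t₃`
we have `X t₁ ∩ X t₃ ⊆ X t₂` (W2). -/
def IsTreeDecomp {V T : Type*} (G : SimpleGraph V) (Tr : SimpleGraph T) (X : T → Finset V) :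
    Prop :=
  Tr.IsTree ∧
  (∀ v : V, ∃ t, v ∈ X t) ∧
  (∀ u v : V, G.Adj u v → ∃ t, u ∈ X t ∧ v ∈ X t) ∧
  (∀ (t₁ t₂ t₃ : T) (p : Tr.Walk t₁ t₃), p.IsPath → t₂ ∈ p.support →
    ∀ v : V, v ∈ X t₁ → v ∈ X t₃ → v ∈ X t₂)

/-- A path-decomposition of `G`, with bags indexed by `Fin n`. -/
def IsPathDecomp {V : Type*} (G : SimpleGraph V) {n : ℕ} (X : Fin n → Finset V) : Prop :=
  (∀ v : V, ∃ i, v ∈ X i) ∧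
  (∀ u v : V, G.Adj u v → ∃ i, u ∈ X i ∧ v ∈ X i) ∧
  (∀ i j k : Fin n, i ≤ j → j ≤ k → ∀ v : V, v ∈ X i → v ∈ X k → v ∈ X j)

/-- The path-width of a finite graph: the least `w` such that `G` has a
path-decomposition all of whose bags have at most `w + 1` vertices. -/
noncomputable def pathwidth {V : Type*} [Fintype V] (G : SimpleGraph V) : ℕ :=
  sInf {w | ∃ (n : ℕ) (X : Fin n → Finset V), IsPathDecomp G X ∧ ∀ i, (X i).card ≤ w + 1}

/-- The tree-width of a finite graph: the least `w` such that `G` has a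
tree-decomposition all of whose bags have at most `w + 1` vertices. -/
noncomputable def treewidth {V : Type*} [Fintype V] (G : SimpleGraph V) : ℕ :=
  sInf {w | ∃ (T : Type) (_ : Fintype T) (Tr : SimpleGraph T) (X : T → Finset V),
    IsTreeDecomp G Tr X ∧ ∀ t, (X t).card ≤ w + 1}

/-- Vertices of the binary tree `CT_h`: paths from the root, recorded as reversed
lists of left/right moves, of length at most `h`. -/
abbrev CTVert (h : ℕ) := {l : List Bool // l.length ≤ h}

/-- The binary tree `CT_h` of height `h`. -/
def CTgraph (h : ℕ) : SimpleGraph (CTVert h) :=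
  SimpleGraph.fromEdgeSet
    {e | ∃ (b : Bool) (σ : List Bool) (hσ : σ.length < h),
      e = s((⟨σ, le_of_lt hσ⟩ : CTVert h), (⟨b :: σ, by simpa using hσ⟩ : CTVert h))}

/-- The graph `𝒫_k`: the binary tree `CT_k` together with one extra vertex (`none`)
adjacent to every leaf of `CT_k`. -/
def Pgraph (k : ℕ) : SimpleGraph (Option (CTVert k)) :=
  SimpleGraph.fromEdgeSet
    ({e | ∃ (b : Bool) (σ : List Bool) (hσ : σ.length < k),
        e = s(some (⟨σ, le_of_lt hσ⟩ : CTVert k), some (⟨b :: σ, by simpa using hσ⟩ : CTVert k))} ∪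
     {e | ∃ l : CTVert k, l.1.length = k ∧ e = s(none, some l)})

/-- Vertices of `𝒬_k`: the two base vertices of the root triangle (`Sum.inl false` and
`Sum.inl true`), together with one apex vertex for each node of the complete binary tree
of depth `< k` (recorded as a reversed list of moves). -/
abbrev QVert (k : ℕ) := Bool ⊕ {l : List Bool // l.length < k}

/-- The two ends of the base edge of the copy of the triangle at node `σ` of `𝒬_k`. -/
def qbase (k : ℕ) : List Bool → QVert k × QVert k
  | [] => (Sum.inl false, Sum.inl true)
  | b :: σ =>
      ((if b then (qbase k σ).2 else (qbase k σ).1),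
        if h : σ.length < k then Sum.inr ⟨σ, h⟩ else Sum.inl false)

/-- The graph `𝒬_k`, built from triangles as in the recursive definition: the triangle at
node `σ` consists of the base edge `qbase k σ` together with the apex vertex `Sum.inr σ`;
the base edge of `𝒬_k` is `s(Sum.inl false, Sum.inl true)`. -/
def Qgraph (k : ℕ) : SimpleGraph (QVert k) :=
  SimpleGraph.fromEdgeSet
    ({s(Sum.inl false, Sum.inl true)} ∪
     {e | ∃ (σ : List Bool) (h : σ.length < k),
        e = s(Sum.inr ⟨σ, h⟩, (qbase k σ).1) ∨ e = s(Sum.inr ⟨σ, h⟩, (qbase k σ).2)})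

/-- The minor vertices of the tree `T_h` (one for each string of length `≤ h`). -/
abbrev MVert (h : ℕ) := {l : List Bool // l.length ≤ h}

/-- The major vertices of the tree `T_h` (one for each string of length `≤ h - 1`). -/
abbrev JVert (h : ℕ) := {l : List Bool // l.length + 1 ≤ h}

/-- Vertices of the tree `T_h` (obtained from `CT_h` by subdividing every edge not incident
with a degree-one vertex and adding the minor root). -/
abbrev TVert (h : ℕ) := MVert h ⊕ JVert h

/-- The tree `T_h`: each major vertex `σ` is adjacent to the minor vertices `σ` (its parent),
`false :: σ` (its left neighbor) and `true :: σ` (its right neighbor). -/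
def Tgraph (h : ℕ) : SimpleGraph (TVert h) :=
  SimpleGraph.fromEdgeSet
    {e | ∃ (σ : List Bool) (hσ : σ.length + 1 ≤ h),
      e = s(Sum.inr ⟨σ, hσ⟩, Sum.inl ⟨σ, Nat.le_of_succ_le hσ⟩) ∨
      ∃ b : Bool, e = s(Sum.inr ⟨σ, hσ⟩, Sum.inl ⟨b :: σ, by simpa using hσ⟩)}

/-- A homeomorphic embedding of `TA` into `TB`: an injection such that for any two edges of
`TA` sharing an end `t`, the corresponding paths of `TB` are edge-disjoint. -/
def IsHomeoEmb {A B : Type*} (TA : SimpleGraph A) (TB : SimpleGraph B) (η : A → B) : Prop :=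
  Function.Injective η ∧
  ∀ ⦃t t₁ t₂ : A⦄, TA.Adj t t₁ → TA.Adj t t₂ → t₁ ≠ t₂ →
    ∀ (p₁ : TB.Walk (η t) (η t₁)) (p₂ : TB.Walk (η t) (η t₂)),
      p₁.IsPath → p₂.IsPath → ∀ e ∈ p₁.edges, e ∉ p₂.edges

/-- `v` lies in the span of `η`: it lies on a path of `TB` between two vertices in the
image of `η`. -/
def inSpan {A B : Type*} (TB : SimpleGraph B) (η : A → B) (v : B) : Prop :=
  ∃ (a₁ a₂ : A) (p : TB.Walk (η a₁) (η a₂)), p.IsPath ∧ v ∈ p.support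

/-- A cascade of height `h` and size `s` in the tree-decomposition `(Tr, X)`:
a homeomorphic embedding of `T_h` with `|X (η t)| = s` for every minor vertex `t`
and `|X t| ≥ s` for every `t` in the span. -/
def IsCascade {V T : Type*} (Tr : SimpleGraph T) (X : T → Finset V) (h s : ℕ)
    (η : TVert h → T) : Prop :=
  IsHomeoEmb (Tgraph h) Tr η ∧
  (∀ l : MVert h, (X (η (Sum.inl l))).card = s) ∧
  (∀ t : T, inSpan Tr η t → s ≤ (X t).card)

/-- An injective cascade with common intersection set `I`. -/
def IsInjectiveCascade {V T : Type*} (Tr : SimpleGraph T) (X : T → Finset V) (h s : ℕ)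
    (η : TVert h → T) (I : Finset V) : Prop :=
  IsCascade Tr X h s η ∧ I.card < s ∧
  ∀ t t' : TVert h, t ≠ t' → ((X (η t) : Set V) ∩ (X (η t') : Set V)) = (I : Set V)

/-- A family of `s` disjoint paths in `G \ I` (a linkage). -/
def IsLinkage {V : Type*} (G : SimpleGraph V) (I : Finset V) {s : ℕ} {x y : Fin s → V}
    (P : ∀ i : Fin s, G.Walk (x i) (y i)) : Prop :=
  (∀ i, (P i).IsPath) ∧
  (∀ i, ∀ v ∈ (P i).support, v ∉ I) ∧
  (∀ i j, i ≠ j → ∀ v ∈ (P i).support, v ∉ (P j).support)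

/-- An ordered cascade: an injective cascade of size `s + |I|` with common intersection set
`I`, together with orderings `ξ t : Fin s → X (η t) \ I` of the bags at minor vertices, such
that at every major vertex there are left and right linkages connecting corresponding
vertices. -/
def IsOrderedCascade {V T : Type*} (G : SimpleGraph V) (Tr : SimpleGraph T)
    (X : T → Finset V) (h s : ℕ) (η : TVert h → T) (I : Finset V)
    (ξ : MVert h → Fin s → V) : Prop :=
  IsInjectiveCascade Tr X h (s + I.card) η I ∧
  (∀ t : MVert h, Function.Injective (ξ t) ∧
    Set.range (ξ t) = (X (η (Sum.inl t)) : Set V) \ (I : Set V)) ∧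
  ∀ (σ : List Bool) (hσ : σ.length + 1 ≤ h),
    (∃ P : ∀ i : Fin s,
        G.Walk (ξ ⟨σ, Nat.le_of_succ_le hσ⟩ i) (ξ ⟨false :: σ, by simpa using hσ⟩ i),
      IsLinkage G I P) ∧
    (∃ Q : ∀ i : Fin s,
        G.Walk (ξ ⟨σ, Nat.le_of_succ_le hσ⟩ i) (ξ ⟨true :: σ, by simpa using hσ⟩ i),
      IsLinkage G I Q)

/-- The vertex set of the `η`-torso at the major vertex `σ` of `T_h`: the union of the bags
`X t - I` over all `t` such that the path in `Tr` from `t` to `η σ` contains none of the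
images of the three minor neighbors of `σ` as an internal vertex. -/
def torsoSet {V T : Type*} (Tr : SimpleGraph T) (X : T → Finset V) {h : ℕ}
    (η : TVert h → T) (I : Finset V) (σ : List Bool) (hσ : σ.length + 1 ≤ h) : Set V :=
  {v | v ∉ I ∧ ∃ t : T,
    (∀ p : Tr.Walk t (η (Sum.inr ⟨σ, hσ⟩)), p.IsPath →
      ∀ u : T,
        (u = η (Sum.inl ⟨σ, Nat.le_of_succ_le hσ⟩) ∨
         u = η (Sum.inl ⟨false :: σ, by simpa using hσ⟩) ∨
         u = η (Sum.inl ⟨true :: σ, by simpa using hσ⟩)) →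
        u ∈ p.support → u = t ∨ u = η (Sum.inr ⟨σ, hσ⟩)) ∧
    v ∈ X t}

/-- `H` is a tripod in `G` with all vertices in `S`, center `c` and feet `f₁, f₂, f₃`:
the union of three paths from `c` to the feet, pairwise disjoint except for `c`,
at least two of which have length at least one. -/
def IsTripodOn {V : Type*} (G : SimpleGraph V) (S : Set V) (H : G.Subgraph)
    (c f₁ f₂ f₃ : V) : Prop :=
  ∃ (W₁ : G.Walk c f₁) (W₂ : G.Walk c f₂) (W₃ : G.Walk c f₃),
    W₁.IsPath ∧ W₂.IsPath ∧ W₃.IsPath ∧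
    (∀ v ∈ W₁.support, v ∈ S) ∧ (∀ v ∈ W₂.support, v ∈ S) ∧ (∀ v ∈ W₃.support, v ∈ S) ∧
    (∀ v, v ∈ W₁.support → v ∈ W₂.support → v = c) ∧
    (∀ v, v ∈ W₁.support → v ∈ W₃.support → v = c) ∧
    (∀ v, v ∈ W₂.support → v ∈ W₃.support → v = c) ∧
    ((1 ≤ W₁.length ∧ 1 ≤ W₂.length) ∨ (1 ≤ W₁.length ∧ 1 ≤ W₃.length) ∨
      (1 ≤ W₂.length ∧ 1 ≤ W₃.length)) ∧
    H = W₁.toSubgraph ⊔ W₂.toSubgraph ⊔ W₃.toSubgraph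

/-- The major vertex `σ` has property `A_{ij}` in the ordered cascade `η` with orderings
`ξ`: there are two disjoint tripods in the `η`-torso at `σ`, with feet as prescribed. -/
def HasPropA {V T : Type*} (G : SimpleGraph V) (Tr : SimpleGraph T) (X : T → Finset V)
    {h s : ℕ} (η : TVert h → T) (I : Finset V) (ξ : MVert h → Fin s → V)
    (σ : List Bool) (hσ : σ.length + 1 ≤ h) (i j : Fin s) : Prop :=
  ∃ (Li Lj : G.Subgraph) (ci cj : V),
    (∃ m₂ m₃ : Fin s, (m₂ = i ∨ m₂ = j) ∧ (m₃ = i ∨ m₃ = j) ∧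
      IsTripodOn G (torsoSet Tr X η I σ hσ) Li ci
        (ξ ⟨σ, Nat.le_of_succ_le hσ⟩ i)
        (ξ ⟨false :: σ, by simpa using hσ⟩ m₂)
        (ξ ⟨true :: σ, by simpa using hσ⟩ m₃)) ∧
    (∃ m₂ m₃ : Fin s, (m₂ = i ∨ m₂ = j) ∧ (m₃ = i ∨ m₃ = j) ∧
      IsTripodOn G (torsoSet Tr X η I σ hσ) Lj cj
        (ξ ⟨σ, Nat.le_of_succ_le hσ⟩ j)
        (ξ ⟨false :: σ, by simpa using hσ⟩ m₂)
        (ξ ⟨true :: σ, by simpa using hσ⟩ m₃)) ∧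
    Disjoint Li.verts Lj.verts

/-- The major vertex `σ` has property `B_{ij}`: there are two tripods `L_i`, `L_j` in the
`η`-torso at `σ`, with feet `v_{m,1}, v_{m,2}, v_{m,3}` where `{v_{i,y}, v_{j,y}}` equals
`{ξ_{t_y} i, ξ_{t_y} j}` for each `y`, which intersect exactly in a path that is the
intersection of the branch of `L_i` to `v_{i,3}` and the branch of `L_j` to `v_{j,2}`,
and which avoids both centers. -/
def HasPropB {V T : Type*} (G : SimpleGraph V) (Tr : SimpleGraph T) (X : T → Finset V)
    {h s : ℕ} (η : TVert h → T) (I : Finset V) (ξ : MVert h → Fin s → V)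
    (σ : List Bool) (hσ : σ.length + 1 ≤ h) (i j : Fin s) : Prop :=
  ∃ (vi vj : Fin 3 → V) (ci cj : V)
    (Wi : ∀ y : Fin 3, G.Walk ci (vi y)) (Wj : ∀ y : Fin 3, G.Walk cj (vj y)),
    (∀ y : Fin 3, ({vi y, vj y} : Set V) =
      {(![ξ ⟨σ, Nat.le_of_succ_le hσ⟩,
          ξ ⟨false :: σ, by simpa using hσ⟩,
          ξ ⟨true :: σ, by simpa using hσ⟩] : Fin 3 → Fin s → V) y i,
       (![ξ ⟨σ, Nat.le_of_succ_le hσ⟩,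
          ξ ⟨false :: σ, by simpa using hσ⟩,
          ξ ⟨true :: σ, by simpa using hσ⟩] : Fin 3 → Fin s → V) y j}) ∧
    (∀ y, (Wi y).IsPath) ∧ (∀ y, (Wj y).IsPath) ∧
    (∀ y, ∀ v ∈ (Wi y).support, v ∈ torsoSet Tr X η I σ hσ) ∧
    (∀ y, ∀ v ∈ (Wj y).support, v ∈ torsoSet Tr X η I σ hσ) ∧
    (∀ y y' : Fin 3, y ≠ y' → ∀ v, v ∈ (Wi y).support → v ∈ (Wi y').support → v = ci) ∧
    (∀ y y' : Fin 3, y ≠ y' → ∀ v, v ∈ (Wj y).support → v ∈ (Wj y').support → v = cj) ∧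
    ((1 ≤ (Wi 0).length ∧ 1 ≤ (Wi 1).length) ∨ (1 ≤ (Wi 0).length ∧ 1 ≤ (Wi 2).length) ∨
      (1 ≤ (Wi 1).length ∧ 1 ≤ (Wi 2).length)) ∧
    ((1 ≤ (Wj 0).length ∧ 1 ≤ (Wj 1).length) ∨ (1 ≤ (Wj 0).length ∧ 1 ≤ (Wj 2).length) ∨
      (1 ≤ (Wj 1).length ∧ 1 ≤ (Wj 2).length)) ∧
    (((Wi 0).toSubgraph ⊔ (Wi 1).toSubgraph ⊔ (Wi 2).toSubgraph) ⊓
      ((Wj 0).toSubgraph ⊔ (Wj 1).toSubgraph ⊔ (Wj 2).toSubgraph)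
        = (Wi 2).toSubgraph ⊓ (Wj 1).toSubgraph) ∧
    ∃ (x y : V) (p : G.Walk x y), p.IsPath ∧
      (Wi 2).toSubgraph ⊓ (Wj 1).toSubgraph = p.toSubgraph ∧
      ci ∉ p.support ∧ cj ∉ p.support

/-- The major vertex `σ` has property `AB_{ij}`: in the `η`-torso at `σ` there are disjoint
paths `L_i, L_j` from `ξ_{t₁}(m)` to `ξ_{t₂}(m)` and disjoint paths `R_i, R_j` from
`ξ_{t₁}(m)` to `ξ_{t₃}(m)`, for `m ∈ {i, j}`. -/
def HasPropAB {V T : Type*} (G : SimpleGraph V) (Tr : SimpleGraph T) (X : T → Finset V)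
    {h s : ℕ} (η : TVert h → T) (I : Finset V) (ξ : MVert h → Fin s → V)
    (σ : List Bool) (hσ : σ.length + 1 ≤ h) (i j : Fin s) : Prop :=
  ∃ (Li : G.Walk (ξ ⟨σ, Nat.le_of_succ_le hσ⟩ i) (ξ ⟨false :: σ, by simpa using hσ⟩ i))
    (Lj : G.Walk (ξ ⟨σ, Nat.le_of_succ_le hσ⟩ j) (ξ ⟨false :: σ, by simpa using hσ⟩ j))
    (Ri : G.Walk (ξ ⟨σ, Nat.le_of_succ_le hσ⟩ i) (ξ ⟨true :: σ, by simpa using hσ⟩ i))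
    (Rj : G.Walk (ξ ⟨σ, Nat.le_of_succ_le hσ⟩ j) (ξ ⟨true :: σ, by simpa using hσ⟩ j)),
    Li.IsPath ∧ Lj.IsPath ∧ Ri.IsPath ∧ Rj.IsPath ∧
    (∀ v ∈ Li.support, v ∈ torsoSet Tr X η I σ hσ) ∧
    (∀ v ∈ Lj.support, v ∈ torsoSet Tr X η I σ hσ) ∧
    (∀ v ∈ Ri.support, v ∈ torsoSet Tr X η I σ hσ) ∧
    (∀ v ∈ Rj.support, v ∈ torsoSet Tr X η I σ hσ) ∧
    (∀ v ∈ Li.support, v ∉ Lj.support) ∧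
    (∀ v ∈ Ri.support, v ∉ Rj.support)

/-- A monotone homeomorphic embedding `T_a ↪ T_h`: the minor root maps to the minor root,
and for every major vertex with trinity `(t₁, t₂, t₃)`, the images of `t₂` and `t₃` are the
left and right neighbors of the (major) image of the vertex. -/
def IsMonotoneEmb (a h : ℕ) (γ : TVert a → TVert h) : Prop :=
  IsHomeoEmb (Tgraph a) (Tgraph h) γ ∧
  γ (Sum.inl ⟨[], Nat.zero_le a⟩) = Sum.inl ⟨[], Nat.zero_le h⟩ ∧
  ∀ (σ : List Bool) (hσ : σ.length + 1 ≤ a),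
    ∃ (τ : List Bool) (hτ : τ.length + 1 ≤ h),
      γ (Sum.inr ⟨σ, hσ⟩) = Sum.inr ⟨τ, hτ⟩ ∧
      γ (Sum.inl ⟨false :: σ, by simpa using hσ⟩) = Sum.inl ⟨false :: τ, by simpa using hτ⟩ ∧
      γ (Sum.inl ⟨true :: σ, by simpa using hσ⟩) = Sum.inl ⟨true :: τ, by simpa using hτ⟩

/-!
Ask for a different height `aᵢ` in each colour `i`; then height `∑ aᵢ` suffices. At the topmost
major vertex `t`, of colour `i` say, apply induction with `aᵢ` lowered by one to the two subtrees
at `t`. Either some subtree contains a tree of the desired height in a colour other than `i`, or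
both contain one of height `aᵢ - 1` in colour `i`, and these two join with `t` at the root.

The induction only produces a map of major vertices which sends the left (right) subtree at `σ`
into the left (right) subtree at the image of `σ`. Such a map extends to the minor vertices, and
the extension is a homeomorphic embedding because of any two edges at a vertex at least one joins
a major vertex to its left or right neighbor: the image of that edge is again an edge, whose
removal puts the images of two vertices on different sides exactly when removal of the edge
separates the vertices.
-/

section Suffix

variable {α : Type*}

theorem eq_or_exists_cons_suffix_of_suffix {σ ρ : List α} (h : σ <:+ ρ) :
    σ = ρ ∨ ∃ b, b :: σ <:+ ρ := by
  obtain ⟨τ, rfl⟩ := h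
  obtain rfl | ⟨τ, b, rfl⟩ := τ.eq_nil_or_concat'
  · exact .inl rfl
  · exact .inr ⟨b, τ, by simp⟩

theorem not_cons_suffix_self (b : α) (σ : List α) : ¬ b :: σ <:+ σ := fun h =>
  absurd h.length_le (by simp)

theorem eq_of_cons_suffix_of_cons_suffix {b d : α} {σ ρ : List α} (hb : b :: σ <:+ ρ)
    (hd : d :: σ <:+ ρ) : b = d :=
  (List.cons.inj ((List.suffix_of_suffix_length_le hb hd le_rfl).eq_of_length rfl)).1

end Suffix

/-- A map of the major vertices of `T_a` to those of `T_h` is branching if it sends the left and the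
right child of each major vertex `σ` into the left and the right subtree at the image of `σ`. These
are the restrictions of monotone homeomorphic embeddings to the major vertices. -/
def IsBranching {a h : ℕ} (F : JVert a → JVert h) : Prop :=
  ∀ (b : Bool) (σ : List Bool) (hσ : (b :: σ).length + 1 ≤ a),
    b :: (F ⟨σ, Nat.le_of_succ_le hσ⟩).1 <:+ (F ⟨b :: σ, hσ⟩).1

namespace IsBranching

variable {a h : ℕ} {F : JVert a → JVert h}

theorem cons_suffix (hF : IsBranching F) {b : Bool} {σ ρ : JVert a} (hσρ : b :: σ.1 <:+ ρ.1) :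
    b :: (F σ).1 <:+ (F ρ).1 := by
  obtain ⟨ρ, hρ⟩ := ρ
  induction ρ with
  | nil => simp at hσρ
  | cons d ρ ih =>
    obtain h | h := List.suffix_cons_iff.1 hσρ
    · obtain ⟨rfl, rfl⟩ := List.cons.inj h
      exact hF _ _ hρ
    · exact (ih _ h).trans ((List.suffix_cons d _).trans (hF d ρ hρ))

theorem cons_suffix_of_cons_suffix_map (hF : IsBranching F) {b : Bool} {σ ρ : JVert a}
    (hσρ : σ.1 <:+ ρ.1) (h : b :: (F σ).1 <:+ (F ρ).1) : b :: σ.1 <:+ ρ.1 := by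
  obtain hσρ | ⟨d, hd⟩ := eq_or_exists_cons_suffix_of_suffix hσρ
  · obtain rfl := Subtype.ext hσρ
    exact absurd h (not_cons_suffix_self _ _)
  · rwa [eq_of_cons_suffix_of_cons_suffix h (hF.cons_suffix hd)]

theorem suffix_of_suffix_map (hF : IsBranching F) {σ ρ : JVert a} (h : (F σ).1 <:+ (F ρ).1) :
    σ.1 <:+ ρ.1 := by
  obtain ⟨σ, hσ⟩ := σ
  induction σ with
  | nil => exact List.nil_suffix
  | cons d σ ih =>
    have hd := (hF d σ hσ).trans h
    exact hF.cons_suffix_of_cons_suffix_map (ih _ ((List.suffix_cons d _).trans hd)) hd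

theorem injective (hF : IsBranching F) : Function.Injective F := fun σ ρ h =>
  have hσρ : σ.1 <:+ ρ.1 := hF.suffix_of_suffix_map (h ▸ List.suffix_rfl)
  have hρσ : ρ.1 <:+ σ.1 := hF.suffix_of_suffix_map (h ▸ List.suffix_rfl)
  Subtype.ext (hσρ.eq_of_length_le hρσ.length_le)

theorem cons_suffix_map_iff (hF : IsBranching F) {b : Bool} {σ ρ : JVert a} :
    b :: (F σ).1 <:+ (F ρ).1 ↔ b :: σ.1 <:+ ρ.1 :=
  ⟨fun h => hF.cons_suffix_of_cons_suffix_map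
    (hF.suffix_of_suffix_map ((List.suffix_cons b _).trans h)) h, hF.cons_suffix⟩

end IsBranching

section Ramsey

variable {κ : Type*} {h n : ℕ}

/-- The map of the major vertices of `T_{n+1}` which sends the root to `ρ` and acts as `F false` and
`F true` on the left and on the right subtree. As major vertices are recorded as reversed lists of
moves, the move at the root is the last entry. -/
def graft (ρ : JVert h) (F : Bool → JVert n → JVert h) (σ : JVert (n + 1)) : JVert h :=
  if hσ : σ.1 = [] then ρ
  else F (σ.1.getLast hσ) ⟨σ.1.dropLast, by
    have := σ.2
    have := List.length_pos_iff.2 hσ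
    grind⟩

theorem graft_nil (ρ : JVert h) (F : Bool → JVert n → JVert h)
    (hσ : ([] : List Bool).length + 1 ≤ n + 1) :
    graft ρ F ⟨[], hσ⟩ = ρ := rfl

theorem graft_append_singleton (ρ : JVert h) (F : Bool → JVert n → JVert h) (σ : JVert n)
    (b : Bool) (hσ : (σ.1 ++ [b]).length + 1 ≤ n + 1) : graft ρ F ⟨σ.1 ++ [b], hσ⟩ = F b σ := by
  simp [graft]

theorem IsBranching.graft {ρ : JVert h} {F : Bool → JVert n → JVert h}
    (hF : ∀ b, IsBranching (F b)) (hρ : ∀ b σ, b :: ρ.1 <:+ (F b σ).1) :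
    IsBranching (graft ρ F) := by
  intro d σ hσ
  obtain rfl | ⟨σ, b, rfl⟩ := σ.eq_nil_or_concat'
  · have hn : ([] : List Bool).length + 1 ≤ n := by simpa using hσ
    rw [graft_nil]
    exact (graft_append_singleton ρ F ⟨[], hn⟩ d hσ) ▸ hρ d ⟨[], hn⟩
  · have hn : (d :: σ).length + 1 ≤ n := by simpa using hσ
    rw [graft_append_singleton ρ F ⟨σ, Nat.le_of_succ_le hn⟩]
    exact (graft_append_singleton ρ F ⟨d :: σ, hn⟩ b hσ) ▸ hF b d σ hn

/-- There is a branching map from the major vertices of `T_n` to the major vertices of colour `i` in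
the subtree of `T_h` at the minor vertex `τ`. -/
def HasMonoBranching (c : JVert h → κ) (i : κ) (n : ℕ) (τ : List Bool) : Prop :=
  ∃ F : JVert n → JVert h, IsBranching F ∧ ∀ σ, τ <:+ (F σ).1 ∧ c (F σ) = i

namespace HasMonoBranching

variable {c : JVert h → κ} {i : κ} {τ : List Bool}

theorem zero (c : JVert h → κ) (i : κ) (τ : List Bool) : HasMonoBranching c i 0 τ :=
  ⟨fun σ => absurd σ.2 (by simp), fun _ _ hσ => absurd hσ (by simp), fun σ => absurd σ.2 (by simp)⟩

theorem of_suffix {ρ : List Bool} (hρ : HasMonoBranching c i n ρ) (hτρ : τ <:+ ρ) :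
    HasMonoBranching c i n τ :=
  let ⟨F, hF, hFρ⟩ := hρ
  ⟨F, hF, fun σ => ⟨hτρ.trans (hFρ σ).1, (hFρ σ).2⟩⟩

theorem succ (t : JVert h) (ht : ∀ b, HasMonoBranching c (c t) n (b :: t.1)) :
    HasMonoBranching c (c t) (n + 1) t.1 := by
  choose F hF hFt using ht
  refine ⟨graft t F, .graft hF fun b σ => (hFt b σ).1, ?_⟩
  rintro ⟨σ, hσ⟩
  obtain rfl | ⟨σ, b, rfl⟩ := σ.eq_nil_or_concat'
  · exact ⟨List.suffix_rfl, rfl⟩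
  · rw [graft_append_singleton t F ⟨σ, by simpa using hσ⟩]
    exact ⟨(List.suffix_cons b _).trans (hFt b _).1, (hFt b _).2⟩

end HasMonoBranching

theorem exists_hasMonoBranching [Fintype κ] [Nonempty κ] (c : JVert h → κ) (a : κ → ℕ)
    (τ : List Bool) (hτ : τ.length + ∑ i, a i ≤ h) : ∃ i, HasMonoBranching c i (a i) τ := by
  classical
  induction hN : ∑ i, a i using Nat.strong_induction_on generalizing a τ with
  | _ N ih
  by_cases h0 : ∃ i, a i = 0
  · obtain ⟨i, hi⟩ := h0
    exact ⟨i, hi ▸ .zero c i τ⟩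
  push Not at h0
  have hN_pos : 0 < ∑ i, a i :=
    Finset.sum_pos (fun i _ => Nat.pos_of_ne_zero (h0 i)) Finset.univ_nonempty
  let t : JVert h := ⟨τ, by lia⟩
  obtain ⟨m, hm⟩ := Nat.exists_eq_succ_of_ne_zero (h0 (c t))
  let a' := Function.update a (c t) m
  have ha' : ∑ i, a' i < ∑ i, a i :=
    Finset.sum_lt_sum (fun i _ => (update_le_self_iff.2 (by lia) : a' ≤ a) i)
      ⟨c t, Finset.mem_univ _, by simp [a', hm]⟩
  have hsub (b : Bool) : ∃ i, HasMonoBranching c i (a' i) (b :: τ) :=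
    ih _ (hN ▸ ha') a' (b :: τ) (by simp only [List.length_cons]; lia) rfl
  by_cases hall : ∀ b, HasMonoBranching c (c t) m (b :: τ)
  · exact ⟨c t, hm ▸ .succ t hall⟩
  push Not at hall
  obtain ⟨b, hb⟩ := hall
  obtain ⟨i, hi⟩ := hsub b
  have hit : i ≠ c t := by
    rintro rfl
    exact hb (by simpa [a'] using hi)
  have hi_a : a' i = a i := Function.update_of_ne hit m a
  exact ⟨i, (hi_a ▸ hi).of_suffix (List.suffix_cons b τ)⟩

end Ramsey

section Cut

variable {V : Type*} {G : SimpleGraph V} {S : Set V}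

theorem mem_iff_mem_of_notMem_edges {e : Sym2 V}
    (hS : ∀ x y, G.Adj x y → s(x, y) ≠ e → (x ∈ S ↔ y ∈ S)) {x y : V} (p : G.Walk x y)
    (he : e ∉ p.edges) : x ∈ S ↔ y ∈ S := by
  induction p with
  | nil => rfl
  | cons hxw p ih =>
    simp only [Walk.edges_cons, List.mem_cons, not_or] at he
    exact (hS _ _ hxw (Ne.symm he.1)).trans (ih he.2)

theorem disjoint_edges_of_cut {t t₁ t₂ : V}
    (hS : ∀ x y, G.Adj x y → s(x, y) ≠ s(t, t₁) → (x ∈ S ↔ y ∈ S))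
    (h₁ : ¬(t ∈ S ↔ t₁ ∈ S)) (h₂ : t ∈ S ↔ t₂ ∈ S) {p₁ : G.Walk t t₁} {p₂ : G.Walk t t₂}
    (hp₁ : p₁.IsPath) (hp₂ : p₂.IsPath) : p₁.edges.Disjoint p₂.edges := by
  have hmem : s(t, t₁) ∈ p₁.edges := by
    by_contra he
    exact h₁ (mem_iff_mem_of_notMem_edges hS p₁ he)
  have hedges : p₁.edges = [s(t, t₁)] := by
    rw [hp₁.eq_adj_toWalk_of_mem_edges hmem]
    rfl
  rw [hedges, List.singleton_disjoint]
  intro he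
  cases p₂ with
  | nil => simp at he
  | @cons _ w _ htw q =>
    have hw : t₁ = w := by simpa using hp₂.eq_snd_of_mem_edges he
    subst hw
    have hq : s(t, t₁) ∉ q.edges := fun hq =>
      ((Walk.cons_isPath_iff _ _).1 hp₂).2 (q.fst_mem_support_of_mem_edges hq)
    exact h₁ (h₂.trans (mem_iff_mem_of_notMem_edges hS q hq).symm)

end Cut

namespace Tgraph

variable {a h : ℕ}

/-- The string which records a major or minor vertex of `T_h`. -/
def label : TVert h → List Bool := Sum.elim Subtype.val Subtype.val

/-- The edge of `T_h` from a major vertex to its parent. -/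
def parentEdge (t : JVert h) : Sym2 (TVert h) :=
  s(Sum.inr t, Sum.inl ⟨t.1, Nat.le_of_succ_le t.2⟩)

/-- The edge of `T_h` from a major vertex to its left (`b = false`) or right (`b = true`)
neighbor. -/
def childEdge (t : JVert h) (b : Bool) : Sym2 (TVert h) :=
  s(Sum.inr t, Sum.inl ⟨b :: t.1, t.2⟩)

/-- The set of vertices of `T_h` in the subtree at the left (`b = false`) or right (`b = true`)
neighbor of the major vertex `t`. -/
def below (t : JVert h) (b : Bool) : Set (TVert h) := {x | b :: t.1 <:+ label x}

theorem exists_eq_parentEdge_or_eq_childEdge {x y : TVert h} (hxy : (Tgraph h).Adj x y) :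
    ∃ t, s(x, y) = parentEdge t ∨ ∃ b, s(x, y) = childEdge t b := by
  obtain ⟨⟨σ, hσ, he⟩, -⟩ := (fromEdgeSet_adj _).1 hxy
  exact ⟨⟨σ, hσ⟩, he⟩

theorem eq_of_eq_parentEdge {t u : JVert h} {x y z : TVert h} (hy : s(x, y) = parentEdge t)
    (hz : s(x, z) = parentEdge u) : y = z := by
  obtain ⟨rfl, rfl⟩ | ⟨rfl, rfl⟩ := Sym2.eq_iff.1 hy <;>
    obtain ⟨hx, rfl⟩ | ⟨hx, rfl⟩ := Sym2.eq_iff.1 hz <;>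
    simp_all [Subtype.ext_iff]

theorem exists_eq_childEdge_or_eq_childEdge {x y z : TVert h} (hxy : (Tgraph h).Adj x y)
    (hxz : (Tgraph h).Adj x z) (hyz : y ≠ z) :
    ∃ t b, s(x, y) = childEdge t b ∨ s(x, z) = childEdge t b := by
  obtain ⟨t, hy | ⟨b, hy⟩⟩ := exists_eq_parentEdge_or_eq_childEdge hxy
  · obtain ⟨u, hz | ⟨b, hz⟩⟩ := exists_eq_parentEdge_or_eq_childEdge hxz
    · exact absurd (eq_of_eq_parentEdge hy hz) hyz
    · exact ⟨u, b, .inr hz⟩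
  · exact ⟨t, b, .inl hy⟩

theorem mem_below_iff_of_ne_childEdge {t : JVert h} {b : Bool} {x y : TVert h}
    (hxy : (Tgraph h).Adj x y) (hne : s(x, y) ≠ childEdge t b) :
    x ∈ below t b ↔ y ∈ below t b := by
  obtain ⟨u, he | ⟨d, he⟩⟩ := exists_eq_parentEdge_or_eq_childEdge hxy
  · obtain ⟨rfl, rfl⟩ | ⟨rfl, rfl⟩ := Sym2.eq_iff.1 he <;> rfl
  · have hud : b :: t.1 ≠ d :: u.1 := by
      intro h
      obtain ⟨rfl, htu⟩ := List.cons.inj h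
      exact hne (Subtype.ext htu ▸ he)
    have hiff : b :: t.1 <:+ u.1 ↔ b :: t.1 <:+ d :: u.1 := by
      rw [List.suffix_cons_iff, or_iff_right hud]
    obtain ⟨rfl, rfl⟩ | ⟨rfl, rfl⟩ := Sym2.eq_iff.1 he
    exacts [hiff, hiff.symm]

theorem not_mem_below_iff_mem_below_of_eq_childEdge {t : JVert h} {b : Bool} {x y : TVert h}
    (he : s(x, y) = childEdge t b) : ¬(x ∈ below t b ↔ y ∈ below t b) := by
  have hiff : ¬(b :: t.1 <:+ t.1 ↔ b :: t.1 <:+ b :: t.1) := by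
    simp [not_cons_suffix_self]
  obtain ⟨rfl, rfl⟩ | ⟨rfl, rfl⟩ := Sym2.eq_iff.1 he
  exacts [hiff, fun h => hiff h.symm]

/-- The action of the extension of a map of major vertices on minor vertices: the left and right
neighbors of `σ` go to the left and right neighbors of `F σ`. -/
def minorMap (F : JVert a → JVert h) : MVert a → MVert h
  | ⟨[], _⟩ => ⟨[], Nat.zero_le h⟩
  | ⟨b :: σ, hσ⟩ => ⟨b :: (F ⟨σ, hσ⟩).1, (F ⟨σ, hσ⟩).2⟩

/-- The extension of a map of major vertices to a map of all vertices of `T_a`. -/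
def extend (F : JVert a → JVert h) : TVert a → TVert h := Sum.map (minorMap F) F

end Tgraph

namespace IsBranching

open Tgraph

variable {a h : ℕ} {F : JVert a → JVert h}

theorem minorMap_injective (hF : IsBranching F) : Function.Injective (minorMap F) := by
  rintro ⟨_ | ⟨b, σ⟩, hσ⟩ ⟨_ | ⟨d, ρ⟩, hρ⟩ h <;>
    simp only [minorMap, Subtype.mk.injEq, List.cons.injEq, reduceCtorEq] at h
  · rfl
  · obtain ⟨rfl, hσρ⟩ := h
    cases hF.injective (Subtype.ext hσρ)
    rfl

theorem extend_mem_below_iff (hF : IsBranching F) {t : JVert a} {b : Bool} {x : TVert a} :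
    extend F x ∈ below (F t) b ↔ x ∈ below t b := by
  obtain ⟨_ | ⟨d, ρ⟩, hρ⟩ | ρ := x
  · simp [extend, minorMap, below, label]
  · have heq : (F t).1 = (F ⟨ρ, hρ⟩).1 ↔ t.1 = ρ := by
      rw [← Subtype.ext_iff, hF.injective.eq_iff, Subtype.ext_iff]
    change b :: (F t).1 <:+ d :: (F ⟨ρ, hρ⟩).1 ↔ b :: t.1 <:+ d :: ρ
    rw [List.suffix_cons_iff, List.suffix_cons_iff, List.cons.injEq, List.cons.injEq, heq,
      hF.cons_suffix_map_iff]
  · exact hF.cons_suffix_map_iff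

theorem disjoint_edges_extend (hF : IsBranching F) {t : JVert a} {b : Bool} {x y z : TVert a}
    (he : s(x, y) = childEdge t b) (hxz : (Tgraph a).Adj x z) (hyz : y ≠ z)
    {p : (Tgraph h).Walk (extend F x) (extend F y)} {q : (Tgraph h).Walk (extend F x) (extend F z)}
    (hp : p.IsPath) (hq : q.IsPath) : p.edges.Disjoint q.edges := by
  have hFe : s(extend F x, extend F y) = childEdge (F t) b := congrArg (Sym2.map (extend F)) he
  have hne : s(x, z) ≠ childEdge t b := fun hz => hyz (Sym2.congr_right.1 (he.trans hz.symm))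
  refine disjoint_edges_of_cut (S := below (F t) b)
    (fun u v huv huv_ne => mem_below_iff_of_ne_childEdge huv (hFe ▸ huv_ne))
    (not_mem_below_iff_mem_below_of_eq_childEdge hFe) ?_ hp hq
  rw [hF.extend_mem_below_iff, hF.extend_mem_below_iff]
  exact mem_below_iff_of_ne_childEdge hxz hne

theorem isHomeoEmb_extend (hF : IsBranching F) : IsHomeoEmb (Tgraph a) (Tgraph h) (extend F) := by
  refine ⟨hF.minorMap_injective.sumMap hF.injective, fun x y z hxy hxz hyz p q hp hq => ?_⟩
  suffices p.edges.Disjoint q.edges from fun e => this (a := e)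
  obtain ⟨t, b, hy | hz⟩ := exists_eq_childEdge_or_eq_childEdge hxy hxz hyz
  · exact hF.disjoint_edges_extend hy hxz hyz hp hq
  · exact (hF.disjoint_edges_extend hz hxy hyz.symm hq hp).symm

theorem isMonotoneEmb_extend (hF : IsBranching F) : IsMonotoneEmb a h (extend F) :=
  ⟨hF.isHomeoEmb_extend, rfl, fun σ hσ => ⟨_, (F ⟨σ, hσ⟩).2, rfl, rfl, rfl⟩⟩

end IsBranching

theorem monochromatic_monotone_embedding_general {κ : Type*} [Fintype κ] [Nonempty κ] {h : ℕ}
    (a : κ → ℕ) (ha : ∑ i, a i ≤ h) (c : JVert h → κ) :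
    ∃ i, ∃ γ : TVert (a i) → TVert h, IsMonotoneEmb (a i) h γ ∧
      ∀ (σ : JVert (a i)) (τ : JVert h), γ (Sum.inr σ) = Sum.inr τ → c τ = i := by
  obtain ⟨i, F, hF, hFi⟩ := exists_hasMonoBranching c a [] (by simpa using ha)
  refine ⟨i, Tgraph.extend F, hF.isMonotoneEmb_extend, fun σ τ hστ => ?_⟩
  obtain rfl : F σ = τ := Sum.inr.inj hστ
  exact (hFi σ).2

/-- Lemma 5.2. For all integers `a, k ≥ 1` there is an `h` such that for
every colouring of the major vertices of `T_h` with `k` colours there is a monotone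
homeomorphic embedding `T_a ↪ T_h` mapping all major vertices of `T_a` to major vertices of
the same colour. -/
theorem monochromatic_monotone_embedding (a k : ℕ) (ha : 1 ≤ a) (hk : 1 ≤ k) :
    ∃ h : ℕ, ∀ c : JVert h → Fin k,
      ∃ γ : TVert a → TVert h, IsMonotoneEmb a h γ ∧
        ∃ col : Fin k, ∀ (σ : JVert a) (τ : JVert h),
          γ (Sum.inr σ) = Sum.inr τ → c τ = col := by
  have : Nonempty (Fin k) := ⟨⟨0, hk⟩⟩
  refine ⟨∑ _ : Fin k, a, fun c => ?_⟩
  obtain ⟨i, γ, hγ, hi⟩ := monochromatic_monotone_embedding_general (fun _ => a) le_rfl c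
  exact ⟨γ, hγ, i, hi⟩
end

section
/- For all integers a, b, k ≥ 1 there exists an integer g(a,b,k) with g(a,b,1) = a, g(a,1,k+1) ≤ g(a,a,k) and g(a,b+1,k+1) ≤ g(a,b,k+1) + g(a,a,k), such that the following holds: let h = g(a,b,k), let the major vertices of T_h be colored with k colors, and let c be one of the colors. Then either there is a monotone homeomorphic embedding η: T_a ↪ T_h such that all major vertices of T_a map to major vertices of the same color, or there is a monotone homeomorphic embedding η: T_b ↪ T_h such that all major vertices of T_b map to major vertices of color c. -/
/-!
Common definitions: minors, widths, connectivity, the specific graphs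
`K4`, `K23`, `C32`, `graphA`, the binary trees `CT_h`, the graphs `𝒫_k`, `𝒬_k`,
the trees `T_h`, homeomorphic embeddings, cascades, and related notions,
following Dang--Thomas, "Minors of two-connected graphs of large path-width".
-/

open SimpleGraph

/-!
The major vertices of `T_h` are the words over `Bool` of length less than `h`, and a monotone
embedding of `T_n` amounts to a map `f` of words of length less than `n` for which `b :: f σ` is a
suffix of `f (b :: σ)`: moving in direction `b` from `σ` is turned into leaving `f σ` in direction
`b`. Such maps are glued together from a root and one map for each direction.

The Ramsey argument takes `g(a, b, k) = b g(a, a, k - 1)` for `k ≥ 2`. If the top `g(a, a, k - 1)`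
levels of the tree avoid the colour `c`, then induction on `k` applies to them. Otherwise there is a
vertex of colour `c` in these levels, and below each of its two descendants there is still room for
a tree of height `g(a, b - 1, k)`; unless one of them contains a monochromatic `T_a`, both contain a
`T_{b - 1}` of colour `c`, and the vertex joins them to a `T_b`.
-/

/-! ### Edge-disjoint paths from a common end -/

section EdgeDisjointPaths

variable {V : Type*} {G : SimpleGraph V} {u x y : V} {A : Set V}

/-- Every path from `u` to `x` is edge-disjoint from every path from `u` to `y`. This is what
`IsHomeoEmb` asks of the images of a vertex and of two of its neighbours. -/
def EdgeDisjointPaths (G : SimpleGraph V) (u x y : V) : Prop :=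
  ∀ (p : G.Walk u x) (q : G.Walk u y), p.IsPath → q.IsPath → ∀ e ∈ p.edges, e ∉ q.edges

lemma EdgeDisjointPaths.symm (h : EdgeDisjointPaths G u x y) : EdgeDisjointPaths G u y x :=
  fun p q hp hq e hep heq => h q p hq hp e heq hep

lemma mem_iff_mem_of_notMem_support
    (hA : ∀ ⦃v w⦄, v ∉ A → w ∈ A → G.Adj v w → v = u) (p : G.Walk x y) (hu : u ∉ p.support) :
    x ∈ A ↔ y ∈ A := by
  induction p with
  | nil => rfl
  | cons hvw p ih =>
    rw [Walk.support_cons, List.mem_cons, not_or] at hu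
    rw [← ih hu.2]
    constructor
    · intro hv
      by_contra hw
      exact hu.2 (hA hw hv hvw.symm ▸ p.start_mem_support)
    · intro hw
      by_contra hv
      exact hu.1 (hA hv hw hvw).symm

lemma mem_iff_mem_of_isPath (hA : ∀ ⦃v w⦄, v ∉ A → w ∈ A → G.Adj v w → v = u) {p : G.Walk u x}
    (hp : p.IsPath) {v : V} (hv : v ∈ p.support) (hvu : v ≠ u) : v ∈ A ↔ x ∈ A := by
  classical
  cases p with
  | nil => exact absurd (List.mem_singleton.1 hv) hvu
  | cons _ p =>
    rw [Walk.cons_isPath_iff] at hp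
    have hvp : v ∈ p.support := (List.mem_cons.1 hv).resolve_left hvu
    exact mem_iff_mem_of_notMem_support hA (p.dropUntil v hvp)
      fun hu => hp.2 (p.support_dropUntil_subset_support hvp hu)

lemma edgeDisjointPaths_of_separated (hA : ∀ ⦃v w⦄, v ∉ A → w ∈ A → G.Adj v w → v = u)
    (hx : x ∈ A) (hy : y ∉ A) : EdgeDisjointPaths G u x y := by
  intro p q hp hq e
  have meet_only_at_u : ∀ v ∈ p.support, v ∈ q.support → v = u := by
    intro v hvp hvq
    by_contra hvu
    exact hy ((mem_iff_mem_of_isPath hA hq hvq hvu).1 ((mem_iff_mem_of_isPath hA hp hvp hvu).2 hx))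
  induction e with
  | h v w =>
    intro hep heq
    have hv := meet_only_at_u v (p.fst_mem_support_of_mem_edges hep)
      (q.fst_mem_support_of_mem_edges heq)
    have hw := meet_only_at_u w (p.snd_mem_support_of_mem_edges hep)
      (q.snd_mem_support_of_mem_edges heq)
    exact (p.adj_of_mem_edges hep).ne (hv.trans hw.symm)

end EdgeDisjointPaths

/-! ### The tree `T_h` -/

namespace Tgraph

variable {h : ℕ}

lemma adj_inr_inl {τ : JVert h} {ω : MVert h} :
    (Tgraph h).Adj (Sum.inr τ) (Sum.inl ω) ↔ ω.1 = τ.1 ∨ ∃ b, ω.1 = b :: τ.1 := by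
  obtain ⟨τ, hτ⟩ := τ
  obtain ⟨ω, hω⟩ := ω
  rw [Tgraph, SimpleGraph.fromEdgeSet_adj]
  constructor
  · rintro ⟨⟨σ, hσ, he | ⟨b, he⟩⟩, -⟩ <;>
      simp only [Sym2.eq_iff, Sum.inr.injEq, Sum.inl.injEq, Subtype.mk.injEq, reduceCtorEq,
        false_and, or_false] at he
    · exact .inl (he.2.trans he.1.symm)
    · exact .inr ⟨b, he.2.trans (congrArg (b :: ·) he.1.symm)⟩
  · rintro (rfl | ⟨b, rfl⟩)
    · exact ⟨⟨ω, hτ, .inl rfl⟩, Sum.inr_ne_inl⟩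
    · exact ⟨⟨τ, hτ, .inr ⟨b, rfl⟩⟩, Sum.inr_ne_inl⟩

lemma not_adj_inl_inl (ω ω' : MVert h) : ¬ (Tgraph h).Adj (Sum.inl ω) (Sum.inl ω') := by
  rw [Tgraph, SimpleGraph.fromEdgeSet_adj]
  rintro ⟨⟨σ, hσ, he | ⟨b, he⟩⟩, -⟩ <;> simp at he

lemma not_adj_inr_inr (τ τ' : JVert h) : ¬ (Tgraph h).Adj (Sum.inr τ) (Sum.inr τ') := by
  rw [Tgraph, SimpleGraph.fromEdgeSet_adj]
  rintro ⟨⟨σ, hσ, he | ⟨b, he⟩⟩, -⟩ <;> simp at he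

/-- The vertices of `T_h` that are separated from the minor root by the minor vertex `ω`, together
with `ω` itself. -/
def branch (h : ℕ) (ω : List Bool) : Set (TVert h) :=
  {x | ω <:+ Sum.elim Subtype.val Subtype.val x}

lemma mem_branch_inl {ω : List Bool} {l : MVert h} : Sum.inl l ∈ branch h ω ↔ ω <:+ l.1 := Iff.rfl

lemma mem_branch_inr {ω : List Bool} {τ : JVert h} : Sum.inr τ ∈ branch h ω ↔ ω <:+ τ.1 := Iff.rfl

lemma exists_eq_of_adj_branch {ω : List Bool} {x y : TVert h} (hx : x ∉ branch h ω)
    (hy : y ∈ branch h ω) (hxy : (Tgraph h).Adj x y) :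
    ∃ (τ : JVert h) (l : MVert h) (b : Bool),
      x = Sum.inr τ ∧ y = Sum.inl l ∧ l.1 = ω ∧ ω = b :: τ.1 := by
  rcases x with l | τ <;> rcases y with l' | τ'
  · exact absurd hxy (not_adj_inl_inl l l')
  · rw [mem_branch_inl] at hx
    rw [mem_branch_inr] at hy
    rcases adj_inr_inl.1 hxy.symm with heq | ⟨b, heq⟩
    · exact absurd (heq ▸ hy) hx
    · exact absurd (heq ▸ hy.trans (List.suffix_cons b τ'.1)) hx
  · rw [mem_branch_inr] at hx
    rw [mem_branch_inl] at hy
    rcases adj_inr_inl.1 hxy with heq | ⟨b, heq⟩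
    · exact absurd (heq ▸ hy) hx
    · rw [heq, List.suffix_cons_iff] at hy
      have hω := hy.resolve_right hx
      exact ⟨τ, l', b, rfl, rfl, heq.trans hω.symm, hω⟩
  · exact absurd hxy (not_adj_inr_inr τ τ')

lemma edgeDisjointPaths_inr (τ : JVert h) {b : Bool} {x y : TVert h}
    (hx : x ∈ branch h (b :: τ.1)) (hy : y ∉ branch h (b :: τ.1)) :
    EdgeDisjointPaths (Tgraph h) (Sum.inr τ) x y := by
  refine edgeDisjointPaths_of_separated (fun v w hv hw hvw => ?_) hx hy
  obtain ⟨σ, -, c, rfl, -, -, hτσ⟩ := exists_eq_of_adj_branch hv hw hvw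
  rw [Subtype.ext (List.cons.inj hτσ).2]

lemma edgeDisjointPaths_inl (ω : MVert h) {x y : TVert h}
    (hx : x ∈ branch h ω.1) (hy : y ∉ branch h ω.1) :
    EdgeDisjointPaths (Tgraph h) (Sum.inl ω) x y := by
  refine (edgeDisjointPaths_of_separated (A := (branch h ω.1)ᶜ) (fun v w hv hw hvw => ?_)
    hy (not_not.2 hx)).symm
  obtain ⟨-, l, -, -, rfl, hl, -⟩ := exists_eq_of_adj_branch hw (not_not.1 hv) hvw.symm
  rw [Subtype.ext hl]

end Tgraph

/-! ### Direction-preserving maps of words -/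

section Words

variable {α : Type*} {n : ℕ} {f : List α → List α}

lemma eq_or_exists_cons_suffix {σ τ : List α} (h : σ <:+ τ) : σ = τ ∨ ∃ c, c :: σ <:+ τ := by
  obtain ⟨p, rfl⟩ := h
  rcases List.eq_nil_or_concat p with rfl | ⟨q, c, rfl⟩
  · exact .inl rfl
  · exact .inr ⟨c, q, by simp⟩

lemma not_cons_suffix_of_length_le {b : α} {σ τ : List α} (h : τ.length ≤ σ.length) :
    ¬ b :: σ <:+ τ :=
  fun hs => absurd hs.length_le (by rw [List.length_cons]; omega)

/-- The maps of words that describe where a monotone embedding of `T_n` sends the major vertices: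
the child of `σ` in direction `b` goes to a descendant of the child of `f σ` in direction `b`. Words
are reversed, as in `JVert`, and values on words of length at least `n` are irrelevant. -/
def PreservesDirections (n : ℕ) (f : List α → List α) : Prop :=
  ∀ b σ, σ.length + 1 < n → b :: f σ <:+ f (b :: σ)

namespace PreservesDirections

lemma cons_suffix_map (hf : PreservesDirections n f) {b : α} {ρ σ : List α} (hσ : σ.length < n)
    (h : b :: ρ <:+ σ) : b :: f ρ <:+ f σ := by
  induction σ with
  | nil => exact absurd h (by simp)
  | cons c σ ih =>
    have hfc := hf c σ hσ
    rcases List.suffix_cons_iff.1 h with heq | hsuff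
    · obtain ⟨rfl, rfl⟩ := List.cons.inj heq
      exact hfc
    · exact (ih (Nat.lt_of_succ_lt hσ) hsuff).trans ((List.suffix_cons c (f σ)).trans hfc)

lemma suffix_of_map_suffix (hf : PreservesDirections n f) {σ τ : List α} (hσ : σ.length < n)
    (hτ : τ.length < n) (h : f σ <:+ f τ) : σ <:+ τ := by
  induction σ with
  | nil => exact List.nil_suffix
  | cons b σ ih =>
    have hb : b :: f σ <:+ f τ := (hf b σ hσ).trans h
    rcases eq_or_exists_cons_suffix
      (ih (Nat.lt_of_succ_lt hσ) ((List.suffix_cons b (f σ)).trans hb)) with rfl | ⟨c, hcτ⟩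
    · exact absurd hb (not_cons_suffix_of_length_le le_rfl)
    · have hc : c :: f σ <:+ f τ := hf.cons_suffix_map hτ hcτ
      have hbc := (List.suffix_of_suffix_length_le hb hc (by simp)).eq_of_length (by simp)
      rwa [(List.cons.inj hbc).1]

lemma injOn (hf : PreservesDirections n f) : Set.InjOn f {σ | σ.length < n} := by
  intro σ hσ τ hτ h
  have hστ := hf.suffix_of_map_suffix hσ hτ (h ▸ List.suffix_rfl)
  have hτσ := hf.suffix_of_map_suffix hτ hσ (h ▸ List.suffix_rfl)
  exact hστ.eq_of_length_le hτσ.length_le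

end PreservesDirections

/-- The image of the minor vertex `σ` under the embedding described by `f`: a minor vertex other
than the root hangs in some direction from a major vertex, and this is preserved. -/
def minorWord (f : List α → List α) : List α → List α
  | [] => []
  | b :: σ => b :: f σ

lemma length_minorWord_le {h : ℕ} (hf : ∀ σ, σ.length + 1 ≤ n → (f σ).length + 1 ≤ h) {σ : List α}
    (hσ : σ.length ≤ n) : (minorWord f σ).length ≤ h := by
  cases σ with
  | nil => exact Nat.zero_le h
  | cons b σ => exact hf σ hσ

namespace PreservesDirections

lemma minorWord_suffix (hf : PreservesDirections n f) {σ : List α} (hσ : σ.length < n) :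
    minorWord f σ <:+ f σ := by
  cases σ with
  | nil => exact List.nil_suffix
  | cons b σ => exact hf b σ hσ

lemma injOn_minorWord (hf : PreservesDirections n f) :
    Set.InjOn (minorWord f) {σ | σ.length ≤ n} := by
  rintro (_ | ⟨b, σ⟩) hσ (_ | ⟨c, τ⟩) hτ h
  · rfl
  · cases h
  · cases h
  · obtain ⟨rfl, hfστ⟩ := List.cons.inj h
    rw [hf.injOn hσ hτ hfστ]

end PreservesDirections

end Words

/-! ### Monotone embeddings from maps of words -/

section TreeMap

variable {n h : ℕ} {f : List Bool → List Bool}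

/-- The map `T_n → T_h` that sends the major vertex `σ` to the major vertex `f σ`. -/
def treeMap (f : List Bool → List Bool) (hlen : ∀ σ, σ.length + 1 ≤ n → (f σ).length + 1 ≤ h) :
    TVert n → TVert h :=
  Sum.map (Subtype.map (minorWord f) fun _ => length_minorWord_le hlen) (Subtype.map f hlen)

namespace PreservesDirections

variable (hf : PreservesDirections n f) (hlen : ∀ σ, σ.length + 1 ≤ n → (f σ).length + 1 ≤ h)

include hf

lemma treeMap_injective : Function.Injective (treeMap f hlen) :=
  Function.Injective.sumMap
    (fun σ τ hστ => Subtype.ext (hf.injOn_minorWord σ.2 τ.2 (congrArg Subtype.val hστ)))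
    (fun σ τ hστ => Subtype.ext (hf.injOn σ.2 τ.2 (congrArg Subtype.val hστ)))

lemma edgeDisjointPaths_treeMap_inl (ω : MVert n) {τ₁ τ₂ : JVert n}
    (h₁ : (Tgraph n).Adj (Sum.inl ω) (Sum.inr τ₁)) (h₂ : (Tgraph n).Adj (Sum.inl ω) (Sum.inr τ₂))
    (hne : τ₁ ≠ τ₂) :
    EdgeDisjointPaths (Tgraph h) (treeMap f hlen (Sum.inl ω))
      (treeMap f hlen (Sum.inr τ₁)) (treeMap f hlen (Sum.inr τ₂)) := by
  have below_above : ∀ (τ τ' : JVert n) (b : Bool), ω.1 = τ.1 → ω.1 = b :: τ'.1 →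
      EdgeDisjointPaths (Tgraph h) (treeMap f hlen (Sum.inl ω))
        (treeMap f hlen (Sum.inr τ)) (treeMap f hlen (Sum.inr τ')) := by
    intro τ τ' b hτ hτ'
    have hω : minorWord f ω.1 = b :: f τ'.1 := by rw [hτ', minorWord]
    refine Tgraph.edgeDisjointPaths_inl _ ?_ ?_
    · change minorWord f ω.1 <:+ f τ.1
      rw [hτ]
      exact hf.minorWord_suffix τ.2
    · change ¬ minorWord f ω.1 <:+ f τ'.1
      rw [hω]
      exact not_cons_suffix_of_length_le le_rfl
  rcases Tgraph.adj_inr_inl.1 h₁.symm with e₁ | ⟨b, e₁⟩ <;>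
    rcases Tgraph.adj_inr_inl.1 h₂.symm with e₂ | ⟨c, e₂⟩
  · exact absurd (Subtype.ext (e₁.symm.trans e₂)) hne
  · exact below_above τ₁ τ₂ c e₁ e₂
  · exact (below_above τ₂ τ₁ b e₂ e₁).symm
  · exact absurd (Subtype.ext (List.cons.inj (e₁.symm.trans e₂)).2) hne

lemma edgeDisjointPaths_treeMap_inr (τ : JVert n) {ω₁ ω₂ : MVert n}
    (h₁ : (Tgraph n).Adj (Sum.inr τ) (Sum.inl ω₁)) (h₂ : (Tgraph n).Adj (Sum.inr τ) (Sum.inl ω₂))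
    (hne : ω₁ ≠ ω₂) :
    EdgeDisjointPaths (Tgraph h) (treeMap f hlen (Sum.inr τ))
      (treeMap f hlen (Sum.inl ω₁)) (treeMap f hlen (Sum.inl ω₂)) := by
  have child_other : ∀ (ω ω' : MVert n) (b : Bool), ω.1 = b :: τ.1 →
      ¬ b :: f τ.1 <:+ minorWord f ω'.1 →
      EdgeDisjointPaths (Tgraph h) (treeMap f hlen (Sum.inr τ))
        (treeMap f hlen (Sum.inl ω)) (treeMap f hlen (Sum.inl ω')) := by
    intro ω ω' b hω hω'
    refine Tgraph.edgeDisjointPaths_inr (b := b) _ ?_ hω'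
    change b :: f τ.1 <:+ minorWord f ω.1
    rw [hω, minorWord]
  have parent_notMem : ∀ (b : Bool) (ω : MVert n), ω.1 = τ.1 →
      ¬ b :: f τ.1 <:+ minorWord f ω.1 := by
    intro b ω hω
    rw [hω]
    exact not_cons_suffix_of_length_le (hf.minorWord_suffix τ.2).length_le
  rcases Tgraph.adj_inr_inl.1 h₁ with e₁ | ⟨b, e₁⟩ <;>
    rcases Tgraph.adj_inr_inl.1 h₂ with e₂ | ⟨c, e₂⟩
  · exact absurd (Subtype.ext (e₁.trans e₂.symm)) hne
  · exact (child_other ω₂ ω₁ c e₂ (parent_notMem c ω₁ e₁)).symm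
  · exact child_other ω₁ ω₂ b e₁ (parent_notMem b ω₂ e₂)
  · refine child_other ω₁ ω₂ b e₁ fun hsuff => hne (Subtype.ext ?_)
    rw [e₂, minorWord] at hsuff
    rw [e₁, e₂, (List.cons.inj (hsuff.eq_of_length rfl)).1]

lemma isMonotoneEmb_treeMap : IsMonotoneEmb n h (treeMap f hlen) := by
  refine ⟨⟨hf.treeMap_injective hlen, ?_⟩, rfl, fun σ hσ => ⟨f σ, hlen σ hσ, rfl, rfl, rfl⟩⟩
  rintro (ω | τ) (ω₁ | τ₁) (ω₂ | τ₂) h₁ h₂ hne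
  case inl.inr.inr =>
    exact hf.edgeDisjointPaths_treeMap_inl hlen ω h₁ h₂ (fun heq => hne (congrArg Sum.inr heq))
  case inr.inl.inl =>
    exact hf.edgeDisjointPaths_treeMap_inr hlen τ h₁ h₂ (fun heq => hne (congrArg Sum.inl heq))
  all_goals first
    | exact absurd h₁ (Tgraph.not_adj_inl_inl _ _)
    | exact absurd h₂ (Tgraph.not_adj_inl_inl _ _)
    | exact absurd h₁ (Tgraph.not_adj_inr_inr _ _)
    | exact absurd h₂ (Tgraph.not_adj_inr_inr _ _)

end PreservesDirections

end TreeMap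

/-! ### Trees in sets of words -/

section TreeEmbedsIn

variable {α : Type*} {n : ℕ} {Q R : Set (List α)}

/-- There is a direction-preserving map from the words of length less than `n` to `Q`. For
`α = Bool` this says that `T_n` has a monotone embedding with all major vertices sent into `Q`. -/
def TreeEmbedsIn (n : ℕ) (Q : Set (List α)) : Prop :=
  ∃ f : List α → List α, PreservesDirections n f ∧ ∀ σ, σ.length < n → f σ ∈ Q

/-- The major vertices of the subtree of height `n` that hangs from the minor vertex `ρ`. -/
def subtreeWords (ρ : List α) (n : ℕ) : Set (List α) :=
  {ω | ρ <:+ ω ∧ ω.length < ρ.length + n}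

lemma subtreeWords_mono (ρ : List α) {m n : ℕ} (h : m ≤ n) :
    subtreeWords ρ m ⊆ subtreeWords ρ n :=
  fun _ hω => ⟨hω.1, hω.2.trans_le (Nat.add_le_add_left h _)⟩

lemma subtreeWords_cons_subset {ρ τ : List α} {m : ℕ} (hτ : τ ∈ subtreeWords ρ m) (b : α) (n : ℕ) :
    subtreeWords (b :: τ) n ⊆ subtreeWords ρ (n + m) := by
  rintro ω ⟨hω, hlen⟩
  refine ⟨hτ.1.trans ((List.suffix_cons b τ).trans hω), ?_⟩
  have := hτ.2
  rw [List.length_cons] at hlen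
  omega

namespace TreeEmbedsIn

lemma mono (h : TreeEmbedsIn n Q) (hQR : Q ⊆ R) : TreeEmbedsIn n R :=
  let ⟨f, hf, hfQ⟩ := h
  ⟨f, hf, fun σ hσ => hQR (hfQ σ hσ)⟩

lemma zero (Q : Set (List α)) : TreeEmbedsIn 0 Q :=
  ⟨id, fun _ _ hσ => absurd hσ (Nat.not_lt_zero _), fun _ hσ => absurd hσ (Nat.not_lt_zero _)⟩

lemma subtreeWords_self (ρ : List α) (n : ℕ) : TreeEmbedsIn n (subtreeWords ρ n) := by
  refine ⟨(· ++ ρ), fun _ _ _ => List.suffix_rfl, fun σ hσ => ⟨List.suffix_append σ ρ, ?_⟩⟩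
  rw [List.length_append]
  omega

lemma succ {τ : List α} (hτ : τ ∈ Q) (h : ∀ b, TreeEmbedsIn n (Q ∩ {ω | b :: τ <:+ ω})) :
    TreeEmbedsIn (n + 1) Q := by
  choose f hf hfQ using h
  -- Words are reversed, so the first step from the root is the last letter.
  let F : List α → List α := fun σ => σ.getLast?.elim τ fun b => f b σ.dropLast
  have F_nil : F [] = τ := rfl
  have F_concat : ∀ σ b, F (σ ++ [b]) = f b σ := fun σ b => by simp [F]
  refine ⟨F, fun c σ hσ => ?_, fun σ hσ => ?_⟩
  · rcases List.eq_nil_or_concat σ with rfl | ⟨σ, b, rfl⟩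
    · have hn : ([] : List α).length < n := Nat.lt_of_succ_lt_succ hσ
      rw [F_nil, ← List.nil_append [c], F_concat]
      exact (hfQ c [] hn).2
    · rw [List.concat_eq_append, ← List.cons_append, F_concat, F_concat]
      rw [List.concat_eq_append, List.length_append, List.length_singleton] at hσ
      exact hf b c σ (Nat.lt_of_succ_lt_succ hσ)
  · rcases List.eq_nil_or_concat σ with rfl | ⟨σ, b, rfl⟩
    · exact hτ
    · rw [List.concat_eq_append, List.length_append, List.length_singleton] at hσ
      rw [List.concat_eq_append, F_concat]
      exact (hfQ b σ (Nat.lt_of_succ_lt_succ hσ)).1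

lemma exists_isMonotoneEmb {h : ℕ} {Q : Set (List Bool)} (hQ : TreeEmbedsIn n Q)
    (hlen : ∀ ω ∈ Q, ω.length < h) :
    ∃ γ : TVert n → TVert h, IsMonotoneEmb n h γ ∧
      ∀ (σ : JVert n) (τ : JVert h), γ (Sum.inr σ) = Sum.inr τ → τ.1 ∈ Q := by
  obtain ⟨f, hf, hfQ⟩ := hQ
  refine ⟨treeMap f fun σ hσ => hlen (f σ) (hfQ σ hσ), hf.isMonotoneEmb_treeMap _, ?_⟩
  intro σ τ hστ
  exact Sum.inr_injective hστ ▸ hfQ σ.1 σ.2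

lemma exists_isMonotoneEmb_of_extend {κ : Type*} {h : ℕ} {c : JVert h → κ} {c' : List Bool → κ}
    {col : κ}
    (hcol : TreeEmbedsIn n (subtreeWords [] h ∩ Function.extend Subtype.val c c' ⁻¹' {col})) :
    ∃ γ : TVert n → TVert h, IsMonotoneEmb n h γ ∧
      ∀ (σ : JVert n) (τ : JVert h), γ (Sum.inr σ) = Sum.inr τ → c τ = col := by
  obtain ⟨γ, hγ, hmem⟩ := hcol.exists_isMonotoneEmb (h := h) fun ω hω => by simpa using hω.1.2
  refine ⟨γ, hγ, fun σ τ hστ => ?_⟩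
  rw [← Subtype.val_injective.extend_apply c c' τ]
  exact (hmem σ τ hστ).2

end TreeEmbedsIn

end TreeEmbedsIn

/-! ### The Ramsey argument -/

section Ramsey

variable {α κ : Type*} {C : List α → κ} {c₀ : κ} {a b : ℕ} {Q R : Set (List α)}

/-- Under the colouring `C`, the set `Q` contains a monochromatic tree of height `a` or a tree of
height `b` of colour `c₀`. -/
def MonochromaticOrFixed (C : List α → κ) (c₀ : κ) (a b : ℕ) (Q : Set (List α)) : Prop :=
  (∃ c, TreeEmbedsIn a (Q ∩ C ⁻¹' {c})) ∨ TreeEmbedsIn b (Q ∩ C ⁻¹' {c₀})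

namespace MonochromaticOrFixed

lemma exists_monochromatic (h : MonochromaticOrFixed C c₀ a a Q) :
    ∃ c, TreeEmbedsIn a (Q ∩ C ⁻¹' {c}) :=
  h.elim id fun h₀ => ⟨c₀, h₀⟩

lemma mono (h : MonochromaticOrFixed C c₀ a b Q) (hQR : Q ⊆ R) : MonochromaticOrFixed C c₀ a b R :=
  h.imp (fun ⟨c, hc⟩ => ⟨c, hc.mono (Set.inter_subset_inter_left _ hQR)⟩)
    fun h₀ => h₀.mono (Set.inter_subset_inter_left _ hQR)

lemma succ {τ : List α} (hτ : τ ∈ Q) (hC : C τ = c₀)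
    (h : ∀ d, MonochromaticOrFixed C c₀ a b (Q ∩ {ω | d :: τ <:+ ω})) :
    MonochromaticOrFixed C c₀ a (b + 1) Q := by
  by_cases hmono : ∃ c, TreeEmbedsIn a (Q ∩ C ⁻¹' {c})
  · exact .inl hmono
  · refine .inr (TreeEmbedsIn.succ ⟨hτ, hC⟩ fun d => ?_)
    rcases h d with ⟨c, hc⟩ | h₀
    · exact absurd ⟨c, hc.mono (Set.inter_subset_inter_left _ Set.inter_subset_left)⟩ hmono
    · rwa [Set.inter_right_comm] at h₀

end MonochromaticOrFixed

lemma monochromaticOrFixed_subtreeWords_mul {S : Set κ} {m : ℕ}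
    (hm : ∀ ρ, subtreeWords ρ m ⊆ C ⁻¹' (S \ {c₀}) →
      ∃ c, TreeEmbedsIn a (subtreeWords ρ m ∩ C ⁻¹' {c}))
    (b : ℕ) (ρ : List α) (hS : subtreeWords ρ (b * m) ⊆ C ⁻¹' S) :
    MonochromaticOrFixed C c₀ a b (subtreeWords ρ (b * m)) := by
  induction b generalizing ρ with
  | zero => exact .inr (.zero _)
  | succ b ih =>
    have top_subset : subtreeWords ρ m ⊆ subtreeWords ρ ((b + 1) * m) :=
      subtreeWords_mono ρ (Nat.le_mul_of_pos_left m b.succ_pos)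
    by_cases hc₀ : ∃ τ ∈ subtreeWords ρ m, C τ = c₀
    · obtain ⟨τ, hτ, hCτ⟩ := hc₀
      have below_subset (d : α) : subtreeWords (d :: τ) (b * m) ⊆ subtreeWords ρ ((b + 1) * m) :=
        Nat.succ_mul b m ▸ subtreeWords_cons_subset hτ d (b * m)
      refine .succ (top_subset hτ) hCτ fun d => ?_
      exact (ih (d :: τ) ((below_subset d).trans hS)).mono
        fun ω hω => ⟨below_subset d hω, hω.1⟩
    · push Not at hc₀
      obtain ⟨c, hc⟩ := hm ρ fun ω hω => ⟨hS (top_subset hω), hc₀ ω hω⟩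
      exact .inl ⟨c, hc.mono (Set.inter_subset_inter_left _ top_subset)⟩

/-- A function `g(a, b, k)` satisfying the paper's recursion, with equality for `k ≥ 2`. The value
at `k = 0` is a convention under which the recursive inequalities hold there as well. -/
def ramseyHeight (a : ℕ) : ℕ → ℕ → ℕ
  | _, 0 => a
  | _, 1 => a
  | b, k + 2 => b * ramseyHeight a a (k + 1)

lemma ramseyHeight_one_le (a k : ℕ) : ramseyHeight a 1 (k + 1) ≤ ramseyHeight a a k := by
  cases k with
  | zero => exact le_rfl
  | succ k => exact (Nat.one_mul _).le

lemma ramseyHeight_succ_le (a b k : ℕ) :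
    ramseyHeight a (b + 1) (k + 1) ≤ ramseyHeight a b (k + 1) + ramseyHeight a a k := by
  cases k with
  | zero => exact Nat.le_add_right a a
  | succ k => exact (Nat.succ_mul b _).le

theorem monochromaticOrFixed_subtreeWords {S : Finset κ} {k : ℕ} (hcard : S.card = k + 1)
    (hc₀ : c₀ ∈ S) (b : ℕ) (ρ : List α)
    (hS : subtreeWords ρ (ramseyHeight a b (k + 1)) ⊆ C ⁻¹' S) :
    MonochromaticOrFixed C c₀ a b (subtreeWords ρ (ramseyHeight a b (k + 1))) := by
  classical
  induction k generalizing S c₀ b ρ with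
  | zero =>
    have all_c₀ : ∀ ω ∈ subtreeWords ρ a, C ω = c₀ := fun ω hω =>
      Finset.card_le_one.1 hcard.le (C ω) (hS hω) c₀ hc₀
    exact .inl ⟨c₀, (TreeEmbedsIn.subtreeWords_self ρ a).mono fun ω hω => ⟨hω, all_c₀ ω hω⟩⟩
  | succ k ih =>
    refine monochromaticOrFixed_subtreeWords_mul (fun ρ' hρ' => ?_) b ρ hS
    have hcard' : (S.erase c₀).card = k + 1 := by
      rw [Finset.card_erase_of_mem hc₀, hcard, Nat.add_sub_cancel]
    obtain ⟨c₁, hc₁⟩ : (S.erase c₀).Nonempty := Finset.card_pos.1 (by omega)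
    rw [← Finset.coe_erase] at hρ'
    exact (ih hcard' hc₁ a ρ' hρ').exists_monochromatic

end Ramsey

/-- from the proof of Lemma 5.2. There is a function `g` with
`g a b 1 = a`, `g a 1 (k+1) ≤ g a a k` and `g a (b+1) (k+1) ≤ g a b (k+1) + g a a k`,
such that for every `k`-colouring of the major vertices of `T_{g a b k}` and every colour
`c₀`, either there is a monotone homeomorphic embedding of `T_a` whose major vertices map
to major vertices of one colour, or there is a monotone homeomorphic embedding of `T_b`
whose major vertices map to major vertices of colour `c₀`. -/
theorem monochromatic_or_fixed_colour_embedding :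
    ∃ g : ℕ → ℕ → ℕ → ℕ,
      (∀ a b, g a b 1 = a) ∧
      (∀ a k, g a 1 (k + 1) ≤ g a a k) ∧
      (∀ a b k, g a (b + 1) (k + 1) ≤ g a b (k + 1) + g a a k) ∧
      ∀ a b k : ℕ, 1 ≤ a → 1 ≤ b → 1 ≤ k →
        ∀ (c : JVert (g a b k) → Fin k) (c₀ : Fin k),
          (∃ γ : TVert a → TVert (g a b k), IsMonotoneEmb a (g a b k) γ ∧
            ∃ col : Fin k, ∀ (σ : JVert a) (τ : JVert (g a b k)),
              γ (Sum.inr σ) = Sum.inr τ → c τ = col) ∨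
          (∃ γ : TVert b → TVert (g a b k), IsMonotoneEmb b (g a b k) γ ∧
            ∀ (σ : JVert b) (τ : JVert (g a b k)),
              γ (Sum.inr σ) = Sum.inr τ → c τ = c₀) := by
  refine ⟨ramseyHeight, fun _ _ => rfl, ramseyHeight_one_le, ramseyHeight_succ_le, ?_⟩
  intro a b k _ _ hk c c₀
  obtain ⟨k, rfl⟩ := Nat.exists_eq_add_of_le' hk
  let C : List Bool → Fin (k + 1) := Function.extend Subtype.val c fun _ => c₀
  rcases monochromaticOrFixed_subtreeWords (C := C) (a := a) (Finset.card_fin (k + 1))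
    (Finset.mem_univ c₀) b [] (fun ω _ => Finset.mem_univ (C ω)) with ⟨col, hcol⟩ | hc₀
  · obtain ⟨γ, hγ, hmono⟩ := hcol.exists_isMonotoneEmb_of_extend
    exact .inl ⟨γ, hγ, col, hmono⟩
  · exact .inr hc₀.exists_isMonotoneEmb_of_extend
end

section
/- Let (T,X) be a tree-decomposition of a graph G, let η: T_1 ↪ T be an ordered cascade in (T,X) with orderings ξ_t of height one and size s + |I|, where I is the common intersection set, let t_0 be the major vertex of T_1, and let i, j ∈ {1,2,...,s} be distinct. If t_0 has property AB_{ij} in η, then t_0 has property A_{ij} or property B_{ij} in η. -/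
/-!
Common definitions: minors, widths, connectivity, the specific graphs
`K4`, `K23`, `C32`, `graphA`, the binary trees `CT_h`, the graphs `𝒫_k`, `𝒬_k`,
the trees `T_h`, homeomorphic embeddings, cascades, and related notions,
following Dang--Thomas, "Minors of two-connected graphs of large path-width".
-/

open SimpleGraph

/-!
Let `L₁`, `L₂` be the disjoint paths from `a₁`, `a₂` to `b₁`, `b₂`, and `R₁`, `R₂` the disjoint
paths from `a₁`, `a₂` to `c₁`, `c₂`. Enlarge `L₁`, `L₂` to a partition of the union of the four
paths into two connected sets. If these separate `c₁` from `c₂`, each of them contains a tripod,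
which gives property `A`.

Otherwise `c₁` and `c₂` lie in the same part `C`, say together with `a₁`, while `a₂` and `b₂` lie in
the other part `P`. The tails of `R₁` and `R₂` after their last vertices in `P` are disjoint and
connected, so they too extend to a partition of `C` into two connected sets, one containing `c₁` and
the other `c₂`. Let `N` be the one containing `a₁` and `K` the other. Then `N` and `K` are adjacent,
and so are `P` and `K`: if `K` contains the tail of `R₁`, that tail misses `a₁` and so is preceded
by a vertex of `P`, and `R₂` starts in `P` anyway. If `b₁ ∈ N`, then `N` and `P ∪ K` carry disjoint
tripods. If `b₁ ∈ K`, take a path in `K` from a neighbor of `P` to whichever of `c₁`, `c₂` lies in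
`K`, and one from a neighbor of `N` to `b₁`. If these paths are disjoint, adding them to `P` and `N`
gives disjoint connected sets carrying tripods; if they meet, the first can be rerouted along the
second so that they share exactly one subpath, and property `B` follows.
-/

section Walks

variable {V : Type*} {G : SimpleGraph V}

theorem isPath_append_iff {u v w : V} {p : G.Walk u v} {q : G.Walk v w} :
    (p.append q).IsPath ↔
      p.IsPath ∧ q.IsPath ∧ ∀ x ∈ p.support, x ∈ q.support → x = v := by
  have hq : v ∉ q.support.tail ∧ q.support.tail.Nodup ↔ q.IsPath := by
    rw [Walk.isPath_def, ← Walk.cons_tail_support, List.nodup_cons, List.tail_cons]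
  rw [Walk.isPath_def, Walk.support_append, List.nodup_append', ← Walk.isPath_def p, ← hq]
  simp only [List.disjoint_left, q.mem_support_iff]
  grind [p.end_mem_support]

theorem exists_eq_append_first_mem {s : Set V} {u v : V} (p : G.Walk u v)
    (hp : ∃ x ∈ p.support, x ∈ s) :
    ∃ x ∈ s, ∃ (q : G.Walk u x) (r : G.Walk x v),
      p = q.append r ∧ ∀ y ∈ q.support, y ∈ s → y = x := by
  induction p with
  | nil => exact ⟨_, by simpa using hp, .nil, .nil, rfl, by simp⟩
  | @cons u b v h p ih =>
    by_cases hu : u ∈ s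
    · exact ⟨u, hu, .nil, .cons h p, rfl, by simp⟩
    · obtain ⟨x, hx, q, r, rfl, hq⟩ := ih (by simpa [hu] using hp)
      exact ⟨x, hx, .cons h q, r, rfl, by simpa [hu] using hq⟩

theorem exists_path_toSubgraph_le {u v x y : V} (p : G.Walk u v)
    (hx : x ∈ p.support) (hy : y ∈ p.support) :
    ∃ q : G.Walk x y, q.IsPath ∧ q.toSubgraph ≤ p.toSubgraph := by
  classical
  obtain ⟨p₁, p₂, hp⟩ := p.mem_support_iff_exists_append.mp hx
  obtain ⟨q₁, q₂, hq⟩ := p.mem_support_iff_exists_append.mp hy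
  refine ⟨(p₁.reverse.append q₁).bypass, Walk.bypass_isPath _,
    Walk.toSubgraph_bypass_le_toSubgraph.trans ?_⟩
  rw [Walk.toSubgraph_append, Walk.toSubgraph_reverse]
  refine sup_le ?_ ?_
  · rw [hp, Walk.toSubgraph_append]
    exact le_sup_left
  · rw [hq, Walk.toSubgraph_append]
    exact le_sup_left

theorem subgraph_inf_le_of_forall_mem_eq {H K L : G.Subgraph} {a : V} (ha : a ∈ L.verts)
    (h : ∀ x ∈ H.verts, x ∈ K.verts → x = a) : H ⊓ K ≤ L :=
  ⟨fun x hx ↦ h x hx.1 hx.2 ▸ ha, fun u v huv ↦ (huv.1.ne <|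
    (h u huv.1.fst_mem huv.2.fst_mem).trans (h v huv.1.snd_mem huv.2.snd_mem).symm).elim⟩

theorem toSubgraph_cons_inf {u v w : V} (h : G.Adj u v) (p : G.Walk v w) {H : G.Subgraph}
    (hu : u ∉ H.verts) : (Walk.cons h p).toSubgraph ⊓ H = p.toSubgraph ⊓ H := by
  have hle : G.subgraphOfAdj h ⊓ H ≤ p.toSubgraph := by
    refine subgraph_inf_le_of_forall_mem_eq p.start_mem_verts_toSubgraph ?_
    rintro x (rfl | rfl) hx
    exacts [(hu hx).elim, rfl]
  rw [Walk.toSubgraph, inf_sup_right, sup_eq_right]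
  exact le_inf hle inf_le_right

-- `p'` leaves `p` at its first vertex on `q` and follows `q` to the last vertex of `p` on `q`.
theorem exists_reroute_along {u v x y : V} {p : G.Walk u v} {q : G.Walk x y} (hp : p.IsPath)
    (h : ∃ z ∈ p.support, z ∈ q.support) :
    ∃ p' : G.Walk u v, p'.IsPath ∧ p'.toSubgraph ≤ p.toSubgraph ⊔ q.toSubgraph ∧
      ∃ (a b : V) (r : G.Walk a b), r.IsPath ∧ p'.toSubgraph ⊓ q.toSubgraph = r.toSubgraph := by
  obtain ⟨a, ha, p₁, p₂, rfl, hp₁⟩ := exists_eq_append_first_mem (s := {z | z ∈ q.support}) p h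
  obtain ⟨b, hb, p₃, p₄, hp₂, hp₃⟩ := exists_eq_append_first_mem (s := {z | z ∈ q.support})
    p₂.reverse ⟨a, by simp, ha⟩
  obtain ⟨r, hr, hrq⟩ := exists_path_toSubgraph_le q ha hb
  obtain ⟨hp₁_path, hp₂_path, hp₁₂⟩ := isPath_append_iff.mp hp
  have hp₃_path : p₃.IsPath := (isPath_append_iff.mp (hp₂ ▸ hp₂_path.reverse)).1
  have hp₃₂ : p₃.toSubgraph ≤ p₂.toSubgraph := by
    rw [← p₂.toSubgraph_reverse, hp₂, Walk.toSubgraph_append]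
    exact le_sup_left
  have hp₃_support : ∀ z ∈ p₃.support, z ∈ p₂.support := by simpa using hp₃₂.1
  have hr_support : ∀ z ∈ r.support, z ∈ q.support := by simpa using hrq.1
  refine ⟨p₁.append (r.append p₃.reverse), ?_, ?_, a, b, r, hr, ?_⟩
  · simp only [isPath_append_iff, Walk.mem_support_append_iff, Walk.support_reverse,
      List.mem_reverse]
    refine ⟨hp₁_path, ⟨hr, hp₃_path.reverse, fun z hzr hz ↦ hp₃ z hz (hr_support z hzr)⟩, ?_⟩
    rintro z hz₁ (hz | hz)
    exacts [hp₁ z hz₁ (hr_support z hz), hp₁₂ z hz₁ (hp₃_support z hz)]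
  · simp only [Walk.toSubgraph_append, Walk.toSubgraph_reverse]
    exact sup_le (le_sup_of_le_left le_sup_left)
      (sup_le (le_sup_of_le_right hrq) (le_sup_of_le_left (le_sup_of_le_right hp₃₂)))
  · have hp₁_inf : p₁.toSubgraph ⊓ q.toSubgraph ≤ r.toSubgraph :=
      subgraph_inf_le_of_forall_mem_eq r.start_mem_verts_toSubgraph (by simpa using hp₁)
    have hp₃_inf : p₃.toSubgraph ⊓ q.toSubgraph ≤ r.toSubgraph :=
      subgraph_inf_le_of_forall_mem_eq r.end_mem_verts_toSubgraph (by simpa using hp₃)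
    simp only [Walk.toSubgraph_append, Walk.toSubgraph_reverse, inf_sup_right]
    rw [inf_eq_left.mpr hrq, sup_eq_left.mpr hp₃_inf, sup_eq_right.mpr hp₁_inf]

end Walks

section ConnectedSets

variable {V : Type*} {G : SimpleGraph V}

theorem exists_path_of_connected_induce {A : Set V} (hA : (G.induce A).Connected) {u v : V}
    (hu : u ∈ A) (hv : v ∈ A) : ∃ p : G.Walk u v, p.IsPath ∧ ∀ x ∈ p.support, x ∈ A := by
  obtain ⟨p, hp⟩ := hA.exists_isPath ⟨u, hu⟩ ⟨v, hv⟩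
  refine ⟨p.map (Embedding.induce A).toHom, hp.map Subtype.val_injective, fun x hx ↦ ?_⟩
  obtain ⟨y, -, rfl⟩ := List.mem_map.mp (Walk.support_map .. ▸ hx)
  exact y.2

theorem exists_adj_of_connected_induce_union {A B : Set V} (h : (G.induce (A ∪ B)).Connected)
    (hA : A.Nonempty) (hB : B.Nonempty) (hAB : Disjoint A B) :
    ∃ u ∈ A, ∃ v ∈ B, G.Adj u v := by
  obtain ⟨a, ha⟩ := hA
  obtain ⟨b, hb⟩ := hB
  obtain ⟨p, -, hp⟩ := exists_path_of_connected_induce h (.inl ha) (.inr hb)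
  obtain ⟨d, hd, hdA, hdB⟩ := p.exists_boundary_dart A ha (hAB.notMem_of_mem_right hb)
  exact ⟨d.fst, hdA, d.snd, (hp _ (p.dart_snd_mem_support_of_mem_darts hd)).resolve_left hdB, d.adj⟩

theorem connected_induce_of_walks {X Z : Set V} (hX : (G.induce X).Connected) (hXZ : X ⊆ Z)
    (h : ∀ v ∈ Z, ∃ x ∈ X, ∃ p : G.Walk v x, ∀ w ∈ p.support, w ∈ Z) :
    (G.induce Z).Connected := by
  obtain ⟨x₀, hx₀⟩ := hX.nonempty
  refine induce_connected_of_patches x₀ (hXZ hx₀) fun {v} hv ↦ ?_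
  obtain ⟨x, hx, p, hp⟩ := h v hv
  have hconn := induce_union_connected hX.preconnected p.connected_induce_support.preconnected
    ⟨x, hx, p.end_mem_support⟩
  exact ⟨_, Set.union_subset hXZ hp, .inl hx₀, .inr p.start_mem_support, hconn.preconnected _ _⟩

-- Enlarge `X` by all that it reaches within `D` without meeting `Y`; every other vertex of `D` then
-- reaches `Y` without meeting the enlarged set.
theorem exists_connected_partition {D X Y : Set V} (hX : (G.induce X).Connected)
    (hY : (G.induce Y).Connected) (hXY : Disjoint X Y) (hXD : X ⊆ D) (hYD : Y ⊆ D)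
    (hD : ∀ v ∈ D, ∃ u ∈ X ∪ Y, ∃ p : G.Walk v u, ∀ w ∈ p.support, w ∈ D) :
    ∃ X' Y' : Set V, X ⊆ X' ∧ Y ⊆ Y' ∧ (G.induce X').Connected ∧ (G.induce Y').Connected ∧
      Disjoint X' Y' ∧ X' ∪ Y' = D := by
  let X' : Set V := {v | ∃ x ∈ X, ∃ p : G.Walk v x, ∀ w ∈ p.support, w ∈ D \ Y}
  have hXX' : X ⊆ X' := fun x hx ↦
    ⟨x, hx, .nil, by simpa using ⟨hXD hx, hXY.notMem_of_mem_left hx⟩⟩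
  have hX'D : X' ⊆ D \ Y := fun v ⟨_, _, p, hp⟩ ↦ hp v p.start_mem_support
  have hYX' : Y ⊆ D \ X' := fun y hy ↦ ⟨hYD hy, fun h ↦ (hX'D h).2 hy⟩
  refine ⟨X', D \ X', hXX', hYX', connected_induce_of_walks hX hXX' ?_,
    connected_induce_of_walks hY hYX' ?_, disjoint_sdiff_self_right,
    Set.union_sdiff_cancel (hX'D.trans Set.sdiff_subset)⟩
  · rintro v ⟨x, hx, p, hp⟩
    refine ⟨x, hx, p, fun w hw ↦ ?_⟩
    obtain ⟨p₁, p₂, rfl⟩ := p.mem_support_iff_exists_append.mp hw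
    exact ⟨x, hx, p₂, fun z hz ↦ hp z (by simp [hz])⟩
  · have walk_to_Y : ∀ {v u : V} (p : G.Walk v u), u ∈ X ∪ Y → (∀ w ∈ p.support, w ∈ D) →
        v ∉ X' → ∃ y ∈ Y, ∃ q : G.Walk v y, ∀ w ∈ q.support, w ∈ D \ X' := by
      intro v u p hu hp hv
      induction p with
      | nil =>
        have hy := hu.resolve_left fun h ↦ hv (hXX' h)
        exact ⟨_, hy, .nil, by simpa using hYX' hy⟩
      | @cons v b u hvb p ih =>
        by_cases hvY : v ∈ Y
        · exact ⟨v, hvY, .nil, by simpa using hYX' hvY⟩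
        · have hvD : v ∈ D := hp v (by simp)
          have hb : b ∉ X' := fun ⟨x, hx, q, hq⟩ ↦
            hv ⟨x, hx, .cons hvb q, by simpa using ⟨⟨hvD, hvY⟩, hq⟩⟩
          obtain ⟨y, hy, q, hq⟩ := ih hu (fun w hw ↦ hp w (by simp [hw])) hb
          exact ⟨y, hy, .cons hvb q, by simpa using ⟨⟨hvD, hv⟩, hq⟩⟩
    rintro v ⟨hvD, hv⟩
    obtain ⟨u, hu, p, hp⟩ := hD v hvD
    exact walk_to_Y p hu hp hv

-- `T` is the part of `p` after its last vertex in `P`.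
theorem exists_connected_tail {P C : Set V} {a c : V} (p : G.Walk a c) (hc : c ∈ C)
    (hp : ∀ v ∈ p.support, v ∈ P ∪ C) :
    ∃ T : Set V, T ⊆ C ∧ (∀ v ∈ T, v ∈ p.support) ∧ (G.induce T).Connected ∧ c ∈ T ∧
      (a ∈ T ∨ ∃ u ∈ P, ∃ v ∈ T, G.Adj u v) := by
  induction p with
  | @nil c => exact ⟨{c}, by simpa, by simp, by simp, rfl, .inl rfl⟩
  | @cons a b c h p ih =>
    obtain ⟨T, hTC, hTp, hT, hcT, hT' | hT'⟩ := ih hc fun v hv ↦ hp v (by simp [hv])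
    · obtain ha | ha := hp a (by simp)
      · exact ⟨T, hTC, by grind [Walk.support_cons], hT, hcT, .inr ⟨a, ha, b, hT', h⟩⟩
      · refine ⟨{a} ∪ T, by grind, by grind [Walk.support_cons], ?_, .inr hcT, .inl (.inl rfl)⟩
        exact connected_induce_union (by simp) hT.preconnected rfl hT' h
    · exact ⟨T, hTC, by grind [Walk.support_cons], hT, hcT, .inr hT'⟩

end ConnectedSets

section Tripods

variable {V : Type*} {G : SimpleGraph V}

/-- The tripod with center `c` whose legs `W y` end at the feet `f y`, except that its legs are
allowed to be trivial; when the feet are distinct, at most one of them is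
(`one_le_length_or_one_le_length`). -/
structure IsTripod {ι : Type*} {c : V} {f : ι → V} (W : ∀ y, G.Walk c (f y)) : Prop where
  isPath : ∀ y, (W y).IsPath
  eq_center : ∀ y y', y ≠ y' → ∀ v, v ∈ (W y).support → v ∈ (W y').support → v = c

theorem one_le_length_or_one_le_length {ι : Type*} {c : V} {f : ι → V}
    (W : ∀ y, G.Walk c (f y)) (hf : f.Injective) {y y' : ι} (h : y ≠ y') :
    1 ≤ (W y).length ∨ 1 ≤ (W y').length := by
  by_contra! hlen
  have hy : c = f y := Walk.eq_of_length_eq_zero (p := W y) (by omega)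
  have hy' : c = f y' := Walk.eq_of_length_eq_zero (p := W y') (by omega)
  exact h (hf (hy.symm.trans hy'))

theorem one_le_length_two_legs {c : V} {f : Fin 3 → V} (W : ∀ y, G.Walk c (f y))
    (hf : f.Injective) :
    (1 ≤ (W 0).length ∧ 1 ≤ (W 1).length) ∨ (1 ≤ (W 0).length ∧ 1 ≤ (W 2).length) ∨
      (1 ≤ (W 1).length ∧ 1 ≤ (W 2).length) := by
  have h₀₁ := one_le_length_or_one_le_length W hf (y := 0) (y' := 1) (by decide)
  have h₀₂ := one_le_length_or_one_le_length W hf (y := 0) (y' := 2) (by decide)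
  have h₁₂ := one_le_length_or_one_le_length W hf (y := 1) (y' := 2) (by decide)
  tauto

theorem exists_isTripod_of_connected_induce {A : Set V} (hA : (G.induce A).Connected)
    {f : Fin 3 → V} (hf : ∀ y, f y ∈ A) :
    ∃ (c : V) (W : ∀ y, G.Walk c (f y)), IsTripod W ∧ ∀ y, ∀ v ∈ (W y).support, v ∈ A := by
  obtain ⟨p, hp, hpA⟩ := exists_path_of_connected_induce hA (hf 0) (hf 1)
  obtain ⟨q, hq, hqA⟩ := exists_path_of_connected_induce hA (hf 2) (hf 0)
  obtain ⟨c, hc, q₁, q₂, rfl, hq₁⟩ := exists_eq_append_first_mem (s := {v | v ∈ p.support}) q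
    ⟨f 0, q.end_mem_support, p.start_mem_support⟩
  obtain ⟨p₁, p₂, rfl⟩ := p.mem_support_iff_exists_append.mp hc
  obtain ⟨hp₁, hp₂, hp₁₂⟩ := isPath_append_iff.mp hp
  have hq₁_path := (isPath_append_iff.mp hq).1
  simp only [Set.mem_ofPred_eq, Walk.mem_support_append_iff] at hq₁ hpA hqA
  refine ⟨c, fun | 0 => p₁.reverse | 1 => p₂ | 2 => q₁.reverse, ⟨?_, ?_⟩, ?_⟩
  · intro y
    fin_cases y
    exacts [hp₁.reverse, hp₂, hq₁_path.reverse]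
  · intro y y' hy v
    fin_cases y <;> fin_cases y' <;> simp <;> grind
  · intro y v
    fin_cases y <;> simp <;> grind

theorem IsTripod.extend {ι : Type*} [DecidableEq ι] {c : V} {f g : ι → V}
    {W : ∀ y, G.Walk c (f y)} (hW : IsTripod W) {k : ι} (hfg : ∀ y, y ≠ k → f y = g y)
    {z : V} (hz : f k = z) {E : G.Walk z (g k)} (hE : E.IsPath)
    (hWE : ∀ y, ∀ v ∈ (W y).support, v ∈ E.support → v = z) :
    ∃ W' : ∀ y, G.Walk c (g y), IsTripod W' ∧ ∀ y, (W' y).toSubgraph =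
      if y = k then (W k).toSubgraph ⊔ E.toSubgraph else (W y).toSubgraph := by
  subst hz
  have extend_leg (y : ι) : ∃ w : G.Walk c (g y), w.IsPath ∧ w.toSubgraph =
      if y = k then (W k).toSubgraph ⊔ E.toSubgraph else (W y).toSubgraph := by
    obtain rfl | hy := eq_or_ne y k
    · exact ⟨(W y).append E, isPath_append_iff.mpr ⟨hW.isPath y, hE, hWE y⟩, by simp⟩
    · rw [← hfg y hy, if_neg hy]
      exact ⟨W y, hW.isPath y, rfl⟩
  choose W' hW' hsub using extend_leg
  have mem_leg {y : ι} {v : V} (hv : v ∈ (W' y).support) :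
      v ∈ (W y).support ∨ y = k ∧ v ∈ E.support := by
    rw [← Walk.mem_verts_toSubgraph, hsub] at hv
    split_ifs at hv with hy
    · subst hy
      simpa using hv
    · simpa [hy] using hv
  have eq_center_of_mem_E {y : ι} {v : V} (hy : y ≠ k) (hv : v ∈ (W y).support)
      (hvE : v ∈ E.support) : v = c :=
    hW.eq_center y k hy v hv (hWE y v hv hvE ▸ (W k).end_mem_support)
  refine ⟨W', ⟨hW', fun y y' hy v hv hv' ↦ ?_⟩, hsub⟩
  obtain hv | ⟨rfl, hvE⟩ := mem_leg hv
  · obtain hv' | ⟨rfl, hvE'⟩ := mem_leg hv'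
    exacts [hW.eq_center y y' hy v hv hv', eq_center_of_mem_E hy hv hvE']
  · exact eq_center_of_mem_E hy.symm ((mem_leg hv').resolve_right fun h ↦ hy h.1.symm) hvE

theorem exists_isTripod_with_leg {P : Set V} (hP : (G.induce P).Connected) {f : Fin 3 → V}
    {k : Fin 3} (hf : ∀ y, y ≠ k → f y ∈ P) {z : V} (hz : z ∈ P) {E : G.Walk z (f k)}
    (hE : E.IsPath) (hEP : ∀ v ∈ E.support, v ∈ P → v = z) :
    ∃ c ∈ P, ∃ W : ∀ y, G.Walk c (f y), IsTripod W ∧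
      (∀ y, ∀ v ∈ (W y).support, v ∈ P ∨ v ∈ E.support) ∧
      (∀ y, y ≠ k → (W y).toSubgraph.verts ⊆ P) ∧
      ∃ L : G.Subgraph, L.verts ⊆ P ∧ (W k).toSubgraph = L ⊔ E.toSubgraph := by
  have hfeet (y : Fin 3) : Function.update f k z y ∈ P := by
    obtain rfl | hy := eq_or_ne y k
    · rwa [Function.update_self]
    · rw [Function.update_of_ne hy]
      exact hf y hy
  obtain ⟨c, W, hW, hWP⟩ := exists_isTripod_of_connected_induce hP hfeet
  obtain ⟨W', hW', hsub⟩ := hW.extend (fun y hy ↦ Function.update_of_ne hy _ _)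
    (Function.update_self _ _ _) hE fun y v hv hvE ↦ hEP v hvE (hWP y v hv)
  have hleg (y : Fin 3) (hy : y ≠ k) : (W' y).toSubgraph.verts ⊆ P := by
    rw [hsub, if_neg hy, Walk.verts_toSubgraph]
    exact hWP y
  have hlong : (W' k).toSubgraph = (W k).toSubgraph ⊔ E.toSubgraph := by rw [hsub, if_pos rfl]
  have hL : (W k).toSubgraph.verts ⊆ P := by
    rw [Walk.verts_toSubgraph]
    exact hWP k
  refine ⟨c, hWP k c (W k).start_mem_support, W', hW', fun y v hv ↦ ?_, hleg, _, hL, hlong⟩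
  rw [← Walk.mem_verts_toSubgraph] at hv
  obtain rfl | hy := eq_or_ne y k
  · rw [hlong] at hv
    exact hv.imp (@hL v) E.mem_verts_toSubgraph.mp
  · exact .inl (hleg y hy hv)

/-- The feet `f` and the feet `g` lie in disjoint connected subsets of `S`, and hence are the feet
of disjoint tripods, as in property `A`. -/
def Separated (G : SimpleGraph V) (S : Set V) (f g : Fin 3 → V) : Prop :=
  ∃ A B : Set V, (G.induce A).Connected ∧ (G.induce B).Connected ∧ A ⊆ S ∧ B ⊆ S ∧
    Disjoint A B ∧ (∀ y, f y ∈ A) ∧ ∀ y, g y ∈ B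

/-- `S` contains tripods with feet `f` and `g` which intersect as in property `B`: in a path
avoiding both centers, in which the leg to `f 2` meets the leg to `g 1`. -/
def Crossing (G : SimpleGraph V) (S : Set V) (f g : Fin 3 → V) : Prop :=
  ∃ (c d : V) (W : ∀ y, G.Walk c (f y)) (U : ∀ y, G.Walk d (g y)), IsTripod W ∧ IsTripod U ∧
    (∀ y, ∀ v ∈ (W y).support, v ∈ S) ∧ (∀ y, ∀ v ∈ (U y).support, v ∈ S) ∧
    ((W 0).toSubgraph ⊔ (W 1).toSubgraph ⊔ (W 2).toSubgraph) ⊓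
      ((U 0).toSubgraph ⊔ (U 1).toSubgraph ⊔ (U 2).toSubgraph) =
        (W 2).toSubgraph ⊓ (U 1).toSubgraph ∧
    ∃ (x y : V) (p : G.Walk x y), p.IsPath ∧
      (W 2).toSubgraph ⊓ (U 1).toSubgraph = p.toSubgraph ∧ c ∉ p.support ∧ d ∉ p.support

theorem Separated.symm {S : Set V} {f g : Fin 3 → V} (h : Separated G S f g) :
    Separated G S g f := by
  obtain ⟨A, B, hA, hB, hAS, hBS, hAB, hf, hg⟩ := h
  exact ⟨B, A, hB, hA, hBS, hAS, hAB.symm, hg, hf⟩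

theorem sup_inf_sup_eq_of_disjoint {α : Type*} [DistribLattice α] [OrderBot α] {a b e u : α}
    (hab : Disjoint a b) (hau : Disjoint a u) (heb : Disjoint e b) :
    (a ⊔ e) ⊓ (b ⊔ u) = e ⊓ u := by
  rw [inf_sup_right, inf_sup_left, inf_sup_left, hab.eq_bot, hau.eq_bot, heb.eq_bot]
  simp only [bot_sup_eq]

theorem crossing_of_inf_legs_eq_path {S P N : Set V} {f g : Fin 3 → V}
    (hP : (G.induce P).Connected) (hN : (G.induce N).Connected) (hPN : Disjoint P N)
    (hPS : P ⊆ S) (hNS : N ⊆ S) (hf : ∀ y, y ≠ 2 → f y ∈ P) (hg : ∀ y, y ≠ 1 → g y ∈ N)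
    {z x : V} (hz : z ∈ P) (hx : x ∈ N)
    {E : G.Walk z (f 2)} (hE : E.IsPath) (hES : ∀ v ∈ E.support, v ∈ S)
    (hEP : ∀ v ∈ E.support, v ∈ P → v = z) (hEN : ∀ v ∈ E.support, v ∉ N)
    {F : G.Walk x (g 1)} (hF : F.IsPath) (hFS : ∀ v ∈ F.support, v ∈ S)
    (hFN : ∀ v ∈ F.support, v ∈ N → v = x) (hFP : ∀ v ∈ F.support, v ∉ P)
    {a b : V} {p : G.Walk a b} (hp : p.IsPath) (hEF : E.toSubgraph ⊓ F.toSubgraph = p.toSubgraph) :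
    Crossing G S f g := by
  obtain ⟨c, hcP, W, hW, hWE, hWP, L, hL, hWL⟩ := exists_isTripod_with_leg hP hf hz hE hEP
  obtain ⟨d, hdN, U, hU, hUF, hUN, M, hM, hUM⟩ := exists_isTripod_with_leg hN hg hx hF hFN
  have hA : ((W 0).toSubgraph ⊔ (W 1).toSubgraph ⊔ L).verts ⊆ P :=
    Set.union_subset (Set.union_subset (hWP 0 (by decide)) (hWP 1 (by decide))) hL
  have hB : ((U 0).toSubgraph ⊔ (U 2).toSubgraph ⊔ M).verts ⊆ N :=
    Set.union_subset (Set.union_subset (hUN 0 (by decide)) (hUN 2 (by decide))) hM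
  have hEN_disj : Disjoint E.toSubgraph.verts N := by simpa [Set.disjoint_left] using hEN
  have hPF_disj : Disjoint P F.toSubgraph.verts := by simpa [Set.disjoint_right] using hFP
  have hAB := Subgraph.disjoint_verts_iff_disjoint.mp (hPN.mono hA hB)
  have hAF := Subgraph.disjoint_verts_iff_disjoint.mp (hPF_disj.mono_left hA)
  have hEB := Subgraph.disjoint_verts_iff_disjoint.mp (hEN_disj.mono_right hB)
  have hlegs : (W 2).toSubgraph ⊓ (U 1).toSubgraph = E.toSubgraph ⊓ F.toSubgraph := by
    rw [hWL, hUM]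
    exact sup_inf_sup_eq_of_disjoint (hAB.mono le_sup_right le_sup_right)
      (hAF.mono_left le_sup_right) (hEB.mono_right le_sup_right)
  have hp_support : ∀ v ∈ p.support, v ∈ E.support ∧ v ∈ F.support := by
    simp only [← Walk.mem_verts_toSubgraph, ← hEF]
    exact fun v hv ↦ hv
  refine ⟨c, d, W, U, hW, hU, fun y v hv ↦ (hWE y v hv).elim (@hPS v) (hES v),
    fun y v hv ↦ (hUF y v hv).elim (@hNS v) (hFS v), ?_, a, b, p, hp, hlegs.trans hEF,
    fun hc ↦ hFP c (hp_support c hc).2 hcP, fun hd ↦ hEN d (hp_support d hd).1 hdN⟩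
  rw [hlegs, ← sup_inf_sup_eq_of_disjoint hAB hAF hEB, hWL, hUM]
  congr 1 <;> ac_rfl

end Tripods

section Rerouting

variable {V : Type*} {G : SimpleGraph V}

theorem crossing_of_support_inter_nonempty {S P N K : Set V} {f g : Fin 3 → V}
    (hP : (G.induce P).Connected) (hN : (G.induce N).Connected)
    (hPN : Disjoint P N) (hPK : Disjoint P K) (hNK : Disjoint N K)
    (hPS : P ⊆ S) (hNS : N ⊆ S) (hKS : K ⊆ S)
    (hf : ∀ y, y ≠ 2 → f y ∈ P) (hg : ∀ y, y ≠ 1 → g y ∈ N)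
    {z n : V} (hz : z ∈ P) (hzn : G.Adj z n) {x w : V} (hx : x ∈ N) (hxw : G.Adj x w)
    {p : G.Walk n (f 2)} (hp : p.IsPath) (hpK : ∀ v ∈ p.support, v ∈ K)
    {q : G.Walk w (g 1)} (hq : q.IsPath) (hqK : ∀ v ∈ q.support, v ∈ K)
    (hpq : ∃ v ∈ p.support, v ∈ q.support) : Crossing G S f g := by
  obtain ⟨p', hp', hp'_le, a, b, r, hr, hp'q⟩ := exists_reroute_along hp hpq
  rw [Set.disjoint_left] at hPN hPK hNK
  have hp'K (v : V) (hv : v ∈ p'.support) : v ∈ K :=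
    (hp'_le.1 (p'.mem_verts_toSubgraph.mpr hv)).elim
      (fun h ↦ hpK v (p.mem_verts_toSubgraph.mp h))
      (fun h ↦ hqK v (q.mem_verts_toSubgraph.mp h))
  have hE (v : V) (hv : v ∈ (Walk.cons hzn p').support) : v = z ∨ v ∈ K :=
    (List.mem_cons.mp hv).imp_right (hp'K v)
  have hF (v : V) (hv : v ∈ (Walk.cons hxw q).support) : v = x ∨ v ∈ K :=
    (List.mem_cons.mp hv).imp_right (hqK v)
  have hEF : (Walk.cons hzn p').toSubgraph ⊓ (Walk.cons hxw q).toSubgraph = r.toSubgraph := by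
    rw [toSubgraph_cons_inf, inf_comm, toSubgraph_cons_inf, inf_comm, hp'q]
    · exact fun h ↦ hNK hx (hp'K x (p'.mem_verts_toSubgraph.mp h))
    · rw [Walk.mem_verts_toSubgraph]
      grind
  exact crossing_of_inf_legs_eq_path hP hN (Set.disjoint_left.mpr hPN) hPS hNS hf hg hz hx
    (hp'.cons fun h ↦ hPK hz (hp'K z h)) (by grind) (by grind) (by grind)
    (hq.cons fun h ↦ hNK hx (hqK x h)) (by grind) (by grind) (by grind) hr hEF

theorem forall_mem_union_of_forall_ne {ι α : Type*} {s t : Set α} {f : ι → α} {k : ι}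
    (hs : ∀ y, y ≠ k → f y ∈ s) (hk : f k ∈ s ∪ t) (y : ι) : f y ∈ s ∪ t := by
  obtain rfl | hy := eq_or_ne y k
  exacts [hk, .inl (hs y hy)]

theorem separated_or_crossing_of_three_connected {S P N K : Set V} {f g : Fin 3 → V}
    (hP : (G.induce P).Connected) (hN : (G.induce N).Connected) (hK : (G.induce K).Connected)
    (hPN : Disjoint P N) (hPK : Disjoint P K) (hNK : Disjoint N K)
    (hPS : P ⊆ S) (hNS : N ⊆ S) (hKS : K ⊆ S)
    (hf : ∀ y, y ≠ 2 → f y ∈ P) (hf₂ : f 2 ∈ K) (hg : ∀ y, y ≠ 1 → g y ∈ N) (hg₁ : g 1 ∈ N ∪ K)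
    (hPK_adj : ∃ u ∈ P, ∃ v ∈ K, G.Adj u v) (hNK_adj : ∃ u ∈ N, ∃ v ∈ K, G.Adj u v) :
    Separated G S f g ∨ Crossing G S f g := by
  obtain ⟨z, hz, n, hn, hzn⟩ := hPK_adj
  obtain ⟨x, hx, w, hw, hxw⟩ := hNK_adj
  obtain hg₁N | hg₁K := hg₁
  · exact .inl ⟨P ∪ K, N, connected_induce_union hP.preconnected hK.preconnected hz hn hzn, hN,
      Set.union_subset hPS hKS, hNS, Set.disjoint_union_left.mpr ⟨hPN, hNK.symm⟩,
      forall_mem_union_of_forall_ne hf (.inr hf₂),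
      fun y ↦ N.union_self ▸ forall_mem_union_of_forall_ne (t := N) hg (.inl hg₁N) y⟩
  · obtain ⟨p, hp, hpK⟩ := exists_path_of_connected_induce hK hn hf₂
    obtain ⟨q, hq, hqK⟩ := exists_path_of_connected_induce hK hw hg₁K
    by_cases hpq : ∃ v ∈ p.support, v ∈ q.support
    · exact .inr (crossing_of_support_inter_nonempty hP hN hPN hPK hNK hPS hNS hKS hf hg hz hzn hx
        hxw hp hpK hq hqK hpq)
    · refine .inl ⟨P ∪ {v | v ∈ p.support}, N ∪ {v | v ∈ q.support},
        connected_induce_union hP.preconnected p.connected_induce_support.preconnected hz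
          p.start_mem_support hzn,
        connected_induce_union hN.preconnected q.connected_induce_support.preconnected hx
          q.start_mem_support hxw,
        Set.union_subset hPS fun v hv ↦ hKS (hpK v hv),
        Set.union_subset hNS fun v hv ↦ hKS (hqK v hv), ?_,
        forall_mem_union_of_forall_ne hf (.inr p.end_mem_support),
        forall_mem_union_of_forall_ne hg (.inr q.end_mem_support)⟩
      rw [Set.disjoint_left] at hPN hPK hNK ⊢
      grind

end Rerouting

section Linkages

variable {V : Type*} {G : SimpleGraph V}

/-- The vertices `x₁ y, x₂ y` can be distributed, for each `y`, among two triples of feet of tripods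
in `S` that are either separated (leading to property `A`) or crossing (property `B`). -/
def HasTripodPair (G : SimpleGraph V) (S : Set V) (x₁ x₂ : Fin 3 → V) : Prop :=
  ∃ f g : Fin 3 → V, (∀ y, ({f y, g y} : Set V) = {x₁ y, x₂ y}) ∧
    (Separated G S f g ∨ Crossing G S f g)

theorem HasTripodPair.symm {S : Set V} {x₁ x₂ : Fin 3 → V} (h : HasTripodPair G S x₁ x₂) :
    HasTripodPair G S x₂ x₁ := by
  obtain ⟨f, g, hfg, h⟩ := h
  exact ⟨f, g, fun y ↦ (hfg y).trans (Set.pair_comm _ _), h⟩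

theorem pair_update_eq_pair {ι α : Type*} [DecidableEq ι] {x₁ x₂ : ι → α} (k y : ι) :
    ({Function.update x₁ k (x₂ k) y, Function.update x₂ k (x₁ k) y} : Set α) = {x₁ y, x₂ y} := by
  obtain rfl | hy := eq_or_ne y k
  · simp [Set.pair_comm]
  · simp [hy]

theorem hasTripodPair_of_third_feet_mem {S P C : Set V} {x₁ x₂ : Fin 3 → V}
    (hP : (G.induce P).Connected) (hC : (G.induce C).Connected) (hPC : Disjoint P C)
    (hPS : P ⊆ S) (hCS : C ⊆ S) (hx₁ : ∀ y, x₁ y ∈ C) (hx₂ : ∀ y, y ≠ 2 → x₂ y ∈ P)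
    (hx₂C : x₂ 2 ∈ C) (R₁ : G.Walk (x₁ 0) (x₁ 2)) (R₂ : G.Walk (x₂ 0) (x₂ 2))
    (hR : ∀ v ∈ R₁.support, v ∉ R₂.support) (hR₁ : ∀ v ∈ R₁.support, v ∈ P ∪ C)
    (hR₂ : ∀ v ∈ R₂.support, v ∈ P ∪ C) : HasTripodPair G S x₁ x₂ := by
  obtain ⟨T₁, hT₁C, hT₁R, hT₁, hx₁T₁, hT₁_adj⟩ := exists_connected_tail R₁ (hx₁ 2) hR₁
  obtain ⟨T₂, hT₂C, hT₂R, hT₂, hx₂T₂, hT₂_adj⟩ := exists_connected_tail R₂ hx₂C hR₂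
  obtain ⟨X₁, X₂, hTX₁, hTX₂, hX₁, hX₂, hX, rfl⟩ := exists_connected_partition hT₁ hT₂
    (Set.disjoint_left.mpr fun v h₁ h₂ ↦ hR v (hT₁R v h₁) (hT₂R v h₂)) hT₁C hT₂C fun v hv ↦ by
      obtain ⟨p, -, hp⟩ := exists_path_of_connected_induce hC hv (hx₁ 2)
      exact ⟨x₁ 2, .inl hx₁T₁, p, hp⟩
  have hX_adj : ∃ u ∈ X₁, ∃ v ∈ X₂, G.Adj u v :=
    exists_adj_of_connected_induce_union hC ⟨_, hTX₁ hx₁T₁⟩ ⟨_, hTX₂ hx₂T₂⟩ hX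
  obtain ⟨hPX₁, hPX₂⟩ := Set.disjoint_union_right.mp hPC
  obtain ⟨hX₁S, hX₂S⟩ := Set.union_subset_iff.mp hCS
  obtain h₀ | h₀ := hx₁ 0
  · obtain ⟨u, hu, v, hv, huv⟩ := hT₂_adj.resolve_left fun h ↦
      hPC.notMem_of_mem_left (hx₂ 0 (by decide)) (hT₂C h)
    refine HasTripodPair.symm ⟨x₂, x₁, fun y ↦ rfl, separated_or_crossing_of_three_connected
      hP hX₁ hX₂ hPX₁ hPX₂ hX hPS hX₁S hX₂S hx₂ (hTX₂ hx₂T₂) ?_ (hx₁ 1)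
      ⟨u, hu, v, hTX₂ hv, huv⟩ hX_adj⟩
    intro y hy
    fin_cases y
    exacts [h₀, (hy rfl).elim, hTX₁ hx₁T₁]
  · obtain ⟨u, hu, v, hv, huv⟩ := hT₁_adj.resolve_left fun h ↦
      hX.notMem_of_mem_left (hTX₁ h) h₀
    obtain ⟨v', hv', u', hu', huv'⟩ := hX_adj
    refine HasTripodPair.symm ⟨Function.update x₂ 2 (x₁ 2), Function.update x₁ 2 (x₂ 2),
      pair_update_eq_pair 2, separated_or_crossing_of_three_connected hP hX₂ hX₁ hPX₂ hPX₁
      hX.symm hPS hX₂S hX₁S ?_ (hTX₁ hx₁T₁) ?_ (hx₁ 1).symm ⟨u, hu, v, hTX₁ hv, huv⟩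
      ⟨u', hu', v', hv', huv'.symm⟩⟩
    · intro y hy
      rw [Function.update_of_ne hy]
      exact hx₂ y hy
    · intro y hy
      fin_cases y
      exacts [h₀, (hy rfl).elim, hTX₂ hx₂T₂]

theorem hasTripodPair_of_partition {S Q₁ Q₂ : Set V} {x₁ x₂ : Fin 3 → V}
    (hQ₁ : (G.induce Q₁).Connected) (hQ₂ : (G.induce Q₂).Connected) (hQ : Disjoint Q₁ Q₂)
    (hQ₁S : Q₁ ⊆ S) (hQ₂S : Q₂ ⊆ S) (hx₁ : ∀ y, y ≠ 2 → x₁ y ∈ Q₁) (hx₂ : ∀ y, y ≠ 2 → x₂ y ∈ Q₂)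
    (R₁ : G.Walk (x₁ 0) (x₁ 2)) (R₂ : G.Walk (x₂ 0) (x₂ 2))
    (hR : ∀ v ∈ R₁.support, v ∉ R₂.support) (hR₁ : ∀ v ∈ R₁.support, v ∈ Q₁ ∪ Q₂)
    (hR₂ : ∀ v ∈ R₂.support, v ∈ Q₁ ∪ Q₂) : HasTripodPair G S x₁ x₂ := by
  have forall_mem {Q : Set V} {x : Fin 3 → V} (hx : ∀ y, y ≠ 2 → x y ∈ Q) (h : x 2 ∈ Q) (y) :
      x y ∈ Q := by
    simpa using forall_mem_union_of_forall_ne (t := Q) hx (.inl h) y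
  obtain h₁ | h₁ := hR₁ _ R₁.end_mem_support <;> obtain h₂ | h₂ := hR₂ _ R₂.end_mem_support
  · exact hasTripodPair_of_third_feet_mem hQ₂ hQ₁ hQ.symm hQ₂S hQ₁S (forall_mem hx₁ h₁) hx₂ h₂ R₁ R₂
      hR (fun v hv ↦ (hR₁ v hv).symm) (fun v hv ↦ (hR₂ v hv).symm)
  · exact ⟨x₁, x₂, fun y ↦ rfl, .inl ⟨Q₁, Q₂, hQ₁, hQ₂, hQ₁S, hQ₂S, hQ, forall_mem hx₁ h₁,
      forall_mem hx₂ h₂⟩⟩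
  · refine ⟨Function.update x₁ 2 (x₂ 2), Function.update x₂ 2 (x₁ 2), pair_update_eq_pair 2,
      .inl ⟨Q₁, Q₂, hQ₁, hQ₂, hQ₁S, hQ₂S, hQ, forall_mem ?_ ?_, forall_mem ?_ ?_⟩⟩ <;>
      simp +contextual [*]
  · exact (hasTripodPair_of_third_feet_mem hQ₁ hQ₂ hQ hQ₁S hQ₂S (forall_mem hx₂ h₂) hx₁ h₁ R₂ R₁
      (fun v h₂ h₁ ↦ hR v h₁ h₂) hR₂ hR₁).symm

theorem hasTripodPair_of_linkages {S : Set V} {x₁ x₂ : Fin 3 → V}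
    (L₁ : G.Walk (x₁ 0) (x₁ 1)) (L₂ : G.Walk (x₂ 0) (x₂ 1))
    (R₁ : G.Walk (x₁ 0) (x₁ 2)) (R₂ : G.Walk (x₂ 0) (x₂ 2))
    (hL₁S : ∀ v ∈ L₁.support, v ∈ S) (hL₂S : ∀ v ∈ L₂.support, v ∈ S)
    (hR₁S : ∀ v ∈ R₁.support, v ∈ S) (hR₂S : ∀ v ∈ R₂.support, v ∈ S)
    (hL : ∀ v ∈ L₁.support, v ∉ L₂.support) (hR : ∀ v ∈ R₁.support, v ∉ R₂.support) :
    HasTripodPair G S x₁ x₂ := by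
  let D : Set V :=
    {v | v ∈ L₁.support ∨ v ∈ L₂.support ∨ v ∈ R₁.support ∨ v ∈ R₂.support}
  have hDS : D ⊆ S := by
    rintro v (hv | hv | hv | hv)
    exacts [hL₁S v hv, hL₂S v hv, hR₁S v hv, hR₂S v hv]
  have walk_to_start {a b : V} (p : G.Walk a b) {v : V} (hv : v ∈ p.support) :
      ∃ q : G.Walk v a, ∀ w ∈ q.support, w ∈ p.support := by
    obtain ⟨p₁, p₂, rfl⟩ := p.mem_support_iff_exists_append.mp hv
    exact ⟨p₁.reverse, by simp +contextual⟩
  obtain ⟨Q₁, Q₂, hLQ₁, hLQ₂, hQ₁, hQ₂, hQ, hQD⟩ := exists_connected_partition (D := D)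
    L₁.connected_induce_support L₂.connected_induce_support (Set.disjoint_left.mpr hL)
    (fun v hv ↦ .inl hv) (fun v hv ↦ .inr (.inl hv)) (by
      rintro v (hv | hv | hv | hv)
      · exact ⟨v, .inl hv, .nil, by simp [D, hv]⟩
      · exact ⟨v, .inr hv, .nil, by simp [D, hv]⟩
      · obtain ⟨q, hq⟩ := walk_to_start R₁ hv
        exact ⟨_, .inl L₁.start_mem_support, q, fun w hw ↦ .inr (.inr (.inl (hq w hw)))⟩
      · obtain ⟨q, hq⟩ := walk_to_start R₂ hv
        exact ⟨_, .inr L₂.start_mem_support, q, fun w hw ↦ .inr (.inr (.inr (hq w hw)))⟩)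
  obtain ⟨hQ₁S, hQ₂S⟩ := Set.union_subset_iff.mp (hQD.trans_subset hDS)
  refine hasTripodPair_of_partition hQ₁ hQ₂ hQ hQ₁S hQ₂S ?_ ?_ R₁ R₂ hR
    (fun v hv ↦ hQD ▸ .inr (.inr (.inl hv))) (fun v hv ↦ hQD ▸ .inr (.inr (.inr hv)))
  · intro y hy
    fin_cases y
    exacts [hLQ₁ L₁.start_mem_support, hLQ₁ L₁.end_mem_support, (hy rfl).elim]
  · intro y hy
    fin_cases y
    exacts [hLQ₂ L₂.start_mem_support, hLQ₂ L₂.end_mem_support, (hy rfl).elim]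

end Linkages

section Cascades

variable {V T : Type*} {G : SimpleGraph V} {Tr : SimpleGraph T} {X : T → Finset V} {h s : ℕ}
  {η : TVert h → T} {I : Finset V} {ξ : MVert h → Fin s → V} {σ : List Bool}
  {hσ : σ.length + 1 ≤ h} {i j : Fin s}

/-- The trinity (parent, left neighbor, right neighbor) of the major vertex `σ` of `T_h`. -/
def trinity {h : ℕ} (σ : List Bool) (hσ : σ.length + 1 ≤ h) : Fin 3 → MVert h :=
  ![⟨σ, Nat.le_of_succ_le hσ⟩, ⟨false :: σ, hσ⟩, ⟨true :: σ, hσ⟩]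

theorem trinity_injective : (trinity σ hσ).Injective := by
  intro y y' hy
  fin_cases y <;> fin_cases y' <;> simp_all [trinity]

theorem IsOrderedCascade.ordering_ne (hη : IsOrderedCascade G Tr X h s η I ξ) {t t' : MVert h}
    (ht : t ≠ t') (k k' : Fin s) : ξ t k ≠ ξ t' k' := by
  have hmem (t : MVert h) (k : Fin s) : ξ t k ∈ (X (η (.inl t)) : Set V) \ I :=
    (hη.2.1 t).2 ▸ Set.mem_range_self k
  intro hk
  have hI : ξ t k ∈ (X (η (.inl t)) : Set V) ∩ X (η (.inl t')) :=
    ⟨(hmem t k).1, hk ▸ (hmem t' k').1⟩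
  rw [hη.1.2.2 _ _ (Sum.inl_injective.ne ht)] at hI
  exact (hmem t k).2 hI

theorem IsOrderedCascade.injective_of_mem_pair (hη : IsOrderedCascade G Tr X h s η I ξ)
    {f : Fin 3 → V}
    (hf : ∀ y, f y ∈ ({ξ (trinity σ hσ y) i, ξ (trinity σ hσ y) j} : Set V)) :
    f.Injective := by
  intro y y' hy
  by_contra hne
  have hξ := hη.ordering_ne ((trinity_injective (hσ := hσ)).ne hne)
  obtain h | h := hf y <;> obtain h' | h' := hf y' <;>
    exact hξ _ _ (h.symm.trans (hy.trans h'))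

theorem exists_isTripodOn_of_connected_induce {A S : Set V} (hA : (G.induce A).Connected)
    (hAS : A ⊆ S) {f : Fin 3 → V} (hf : f.Injective) (hfA : ∀ y, f y ∈ A) :
    ∃ (H : G.Subgraph) (c : V), H.verts ⊆ A ∧ IsTripodOn G S H c (f 0) (f 1) (f 2) := by
  obtain ⟨c, W, hW, hWA⟩ := exists_isTripod_of_connected_induce hA hfA
  have hWS (y : Fin 3) (v : V) (hv : v ∈ (W y).support) : v ∈ S := hAS (hWA y v hv)
  refine ⟨_, c, ?_, W 0, W 1, W 2, hW.isPath 0, hW.isPath 1, hW.isPath 2, hWS 0, hWS 1, hWS 2,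
    hW.eq_center 0 1 (by decide), hW.eq_center 0 2 (by decide), hW.eq_center 1 2 (by decide),
    one_le_length_two_legs W hf, rfl⟩
  simp only [Subgraph.verts_sup, Walk.verts_toSubgraph, Set.union_subset_iff]
  exact ⟨⟨hWA 0, hWA 1⟩, hWA 2⟩

theorem IsOrderedCascade.exists_tripod_of_connected_induce
    (hη : IsOrderedCascade G Tr X h s η I ξ) {A S : Set V} (hA : (G.induce A).Connected)
    (hAS : A ⊆ S) {f : Fin 3 → V} (hfA : ∀ y, f y ∈ A)
    (hf : ∀ y, f y ∈ ({ξ (trinity σ hσ y) i, ξ (trinity σ hσ y) j} : Set V)) {k : Fin s}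
    (hfk : f 0 = ξ (trinity σ hσ 0) k) :
    ∃ (H : G.Subgraph) (c : V), H.verts ⊆ A ∧
      ∃ m₂ m₃ : Fin s, (m₂ = i ∨ m₂ = j) ∧ (m₃ = i ∨ m₃ = j) ∧
        IsTripodOn G S H c (ξ (trinity σ hσ 0) k) (ξ (trinity σ hσ 1) m₂)
          (ξ (trinity σ hσ 2) m₃) := by
  obtain ⟨H, c, hHA, hH⟩ :=
    exists_isTripodOn_of_connected_induce hA hAS (hη.injective_of_mem_pair hf) hfA
  have exists_index (y : Fin 3) : ∃ m, (m = i ∨ m = j) ∧ f y = ξ (trinity σ hσ y) m :=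
    (hf y).elim (fun h ↦ ⟨i, .inl rfl, h⟩) (fun h ↦ ⟨j, .inr rfl, h⟩)
  obtain ⟨m₂, hm₂, hf₁⟩ := exists_index 1
  obtain ⟨m₃, hm₃, hf₂⟩ := exists_index 2
  exact ⟨H, c, hHA, m₂, m₃, hm₂, hm₃, hfk ▸ hf₁ ▸ hf₂ ▸ hH⟩

theorem IsOrderedCascade.hasPropA_of_separated (hη : IsOrderedCascade G Tr X h s η I ξ)
    {f g : Fin 3 → V}
    (hfg : ∀ y, ({f y, g y} : Set V) = {ξ (trinity σ hσ y) i, ξ (trinity σ hσ y) j})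
    (hsep : Separated G (torsoSet Tr X η I σ hσ) f g) : HasPropA G Tr X η I ξ σ hσ i j := by
  wlog hi : f 0 = ξ (trinity σ hσ 0) i ∧ g 0 = ξ (trinity σ hσ 0) j generalizing f g
  · exact this (fun y ↦ (Set.pair_comm _ _).trans (hfg y)) hsep.symm
      ((Set.pair_eq_pair_iff.mp (hfg 0)).resolve_left hi).symm
  obtain ⟨A, B, hA, hB, hAS, hBS, hAB, hfA, hgB⟩ := hsep
  obtain ⟨Li, ci, hLi, hLi_tripod⟩ := hη.exists_tripod_of_connected_induce hA hAS hfA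
    (fun y ↦ (hfg y).subset (Set.mem_insert _ _)) hi.1
  obtain ⟨Lj, cj, hLj, hLj_tripod⟩ := hη.exists_tripod_of_connected_induce hB hBS hgB
    (fun y ↦ (hfg y).subset (Set.mem_insert_of_mem _ rfl)) hi.2
  exact ⟨Li, Lj, ci, cj, hLi_tripod, hLj_tripod, hAB.mono hLi hLj⟩

theorem IsOrderedCascade.hasPropB_of_crossing (hη : IsOrderedCascade G Tr X h s η I ξ)
    {f g : Fin 3 → V}
    (hfg : ∀ y, ({f y, g y} : Set V) = {ξ (trinity σ hσ y) i, ξ (trinity σ hσ y) j})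
    (hcross : Crossing G (torsoSet Tr X η I σ hσ) f g) : HasPropB G Tr X η I ξ σ hσ i j := by
  obtain ⟨c, d, W, U, hW, hU, hWS, hUS, hinf, hpath⟩ := hcross
  have hf : f.Injective := hη.injective_of_mem_pair fun y ↦ (hfg y).subset (Set.mem_insert _ _)
  have hg : g.Injective :=
    hη.injective_of_mem_pair fun y ↦ (hfg y).subset (Set.mem_insert_of_mem _ rfl)
  refine ⟨f, g, c, d, W, U, ?_, hW.isPath, hU.isPath, hWS, hUS, hW.eq_center, hU.eq_center,
    one_le_length_two_legs W hf, one_le_length_two_legs U hg, hinf, hpath⟩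
  intro y
  rw [hfg]
  fin_cases y <;> rfl

end Cascades

theorem propA_or_propB_of_propAB_general {V T : Type*} {G : SimpleGraph V} {Tr : SimpleGraph T}
    {X : T → Finset V} {h s : ℕ} {η : TVert h → T} {I : Finset V} {ξ : MVert h → Fin s → V}
    {σ : List Bool} {hσ : σ.length + 1 ≤ h} {i j : Fin s}
    (hη : IsOrderedCascade G Tr X h s η I ξ)
    (hAB : HasPropAB G Tr X η I ξ σ hσ i j) :
    HasPropA G Tr X η I ξ σ hσ i j ∨ HasPropB G Tr X η I ξ σ hσ i j := by
  obtain ⟨Li, Lj, Ri, Rj, -, -, -, -, hLi, hLj, hRi, hRj, hL, hR⟩ := hAB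
  obtain ⟨f, g, hfg, hsep | hcross⟩ := hasTripodPair_of_linkages
    (x₁ := fun y ↦ ξ (trinity σ hσ y) i) (x₂ := fun y ↦ ξ (trinity σ hσ y) j)
    Li Lj Ri Rj hLi hLj hRi hRj hL hR
  exacts [.inl (hη.hasPropA_of_separated hfg hsep), .inr (hη.hasPropB_of_crossing hfg hcross)]

/-- Lemma 6.1. Let `η` be an ordered cascade of height one and size
`s + |I|` in a tree-decomposition `(T, X)` of `G`, with orderings `ξ`, and let `t₀` be the
major vertex of `T₁`. If `t₀` has property `AB_{ij}` in `η`, then `t₀` has property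
`A_{ij}` or property `B_{ij}` in `η`. -/
theorem propA_or_propB_of_propAB {V T : Type} [Fintype V] [Fintype T]
    (G : SimpleGraph V) (Tr : SimpleGraph T) (X : T → Finset V)
    (hTD : IsTreeDecomp G Tr X) (s : ℕ) (η : TVert 1 → T) (I : Finset V)
    (ξ : MVert 1 → Fin s → V)
    (hη : IsOrderedCascade G Tr X 1 s η I ξ)
    (i j : Fin s) (hij : i ≠ j)
    (hAB : HasPropAB G Tr X η I ξ [] (by simp) i j) :
    HasPropA G Tr X η I ξ [] (by simp) i j ∨ HasPropB G Tr X η I ξ [] (by simp) i j :=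
  propA_or_propB_of_propAB_general hη hAB
end

section
/- For every integer k ≥ 2, the graph 𝒬_k has a minor isomorphic to the binary tree CT_{k−1}. -/
/-!
Common definitions: minors, widths, connectivity, the specific graphs
`K4`, `K23`, `C32`, `graphA`, the binary trees `CT_h`, the graphs `𝒫_k`, `𝒬_k`,
the trees `T_h`, homeomorphic embeddings, cascades, and related notions,
following Dang--Thomas, "Minors of two-connected graphs of large path-width".
-/

open SimpleGraph

theorem IsMinor.of_isContained {W V : Type*} {H : SimpleGraph W} {G : SimpleGraph V}
    (hHG : H ⊑ G) : IsMinor H G := by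
  obtain ⟨f⟩ := hHG
  refine ⟨fun w ↦ {f w}, fun w ↦ Set.singleton_nonempty (f w), fun w ↦ .of_subsingleton,
    fun w₁ w₂ hne ↦ Set.disjoint_singleton.mpr (f.injective.ne hne), fun w₁ w₂ hadj ↦ ?_⟩
  exact ⟨f w₁, rfl, f w₂, rfl, f.toHom.map_adj hadj⟩

theorem CTgraph_adj_iff {h : ℕ} {u v : CTVert h} :
    (CTgraph h).Adj u v ↔ ∃ b : Bool, v.1 = b :: u.1 ∨ u.1 = b :: v.1 := by
  rw [CTgraph, fromEdgeSet_adj]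
  constructor
  · rintro ⟨⟨b, σ, hσ, he⟩, -⟩
    obtain ⟨rfl, rfl⟩ | ⟨rfl, rfl⟩ := Sym2.eq_iff.mp he
    exacts [⟨b, .inl rfl⟩, ⟨b, .inr rfl⟩]
  · obtain ⟨u, hu⟩ := u
    obtain ⟨v, hv⟩ := v
    rintro ⟨b, rfl | rfl⟩
    · exact ⟨⟨b, u, hv, rfl⟩, by simp⟩
    · exact ⟨⟨b, v, hu, Sym2.eq_swap⟩, by simp⟩

theorem qbase_cons_snd {k : ℕ} (b : Bool) {σ : List Bool} (hσ : σ.length < k) :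
    (qbase k (b :: σ)).2 = Sum.inr ⟨σ, hσ⟩ := by
  simp [qbase, hσ]

theorem Qgraph_adj_apex_apex_cons {k : ℕ} {b : Bool} {σ : List Bool} (hσ : σ.length < k)
    (hbσ : (b :: σ).length < k) :
    (Qgraph k).Adj (Sum.inr ⟨σ, hσ⟩) (Sum.inr ⟨b :: σ, hbσ⟩) := by
  rw [Qgraph, fromEdgeSet_adj]
  refine ⟨.inr ⟨b :: σ, hbσ, .inr ?_⟩, by simp⟩
  rw [qbase_cons_snd b hσ, Sym2.eq_swap]

/-- The copy lives on the apexes alone: the apex of `σ` is an end of the base edge of the triangle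
at each child of `σ`, hence adjacent to the apex of that child. -/
theorem CTgraph_isContained_Qgraph {h k : ℕ} (hk : h < k) : CTgraph h ⊑ Qgraph k := by
  let apex (w : CTVert h) : QVert k := Sum.inr ⟨w.1, w.2.trans_lt hk⟩
  have apex_injective : Function.Injective apex := fun u v huv ↦ by
    simpa [apex, Subtype.ext_iff] using huv
  have apex_adj {u v : CTVert h} (huv : (CTgraph h).Adj u v) :
      (Qgraph k).Adj (apex u) (apex v) := by
    obtain ⟨u, hu⟩ := u
    obtain ⟨v, hv⟩ := v
    obtain ⟨b, rfl | rfl⟩ := CTgraph_adj_iff.mp huv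
    · exact Qgraph_adj_apex_apex_cons _ _
    · exact (Qgraph_adj_apex_apex_cons _ _).symm
  exact ⟨⟨apex, apex_adj⟩, apex_injective⟩

/-- For every `k ≥ 2`, the graph `𝒬_k` has a minor isomorphic to the
binary tree `CT_{k-1}`. -/
theorem Qk_has_CT_minor (k : ℕ) (hk : 2 ≤ k) : IsMinor (CTgraph (k - 1)) (Qgraph k) := by
  have height_lt : k - 1 < k := by lia
  exact .of_isContained (CTgraph_isContained_Qgraph height_lt)
end
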